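/- arXiv:2210.00210 — 2 statements merged into one kernel-verified Lean document; each statement's English description precedes it below -/
import Mathlib

section
/- Let G be a chordal finite simple graph and let Δ(G) be its clique complex. Then, for any field K, the reduced simplicial homology H̃_i(Δ(G); K) and reduced simplicial cohomology H̃^i(Δ(G); K) vanish for every i ≠ 0. -/
open MvPolynomial

/-- The edge ideal of a graph, generated by `xᵢxⱼ` for edges `{i,j}`. -/
noncomputable def edgeIdeal (K : Type) [Field K] {V : Type} (G : SimpleGraph V) :
    Ideal (MvPolynomial V K) :=
  Ideal.span {m | ∃ i j, G.Adj i j ∧ m = X i * X j}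

/-- A finite set of edges of `G` forming a matching (pairwise vertex-disjoint edges). -/
def IsMatchingSet {V : Type} (G : SimpleGraph V) (M : Finset (Sym2 V)) : Prop :=
  (↑M ⊆ G.edgeSet) ∧ ∀ e ∈ M, ∀ f ∈ M, e ≠ f → ∀ v, v ∈ e → v ∉ f

/-- The vertex set of a set of edges. -/
def matchVerts {V : Type} (M : Finset (Sym2 V)) : Set V := {v | ∃ e ∈ M, v ∈ e}

/-- The matching number of `G`. -/
noncomputable def matchNum {V : Type} (G : SimpleGraph V) : ℕ :=
  sSup {k | ∃ M : Finset (Sym2 V), IsMatchingSet G M ∧ M.card = k}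

/-- A graph is chordal if it has no induced cycle of length `≥ 4`. -/
def IsChordal {V : Type} (G : SimpleGraph V) : Prop :=
  ∀ m : ℕ, 4 ≤ m → ∀ v : ZMod m → V, Function.Injective v →
    ¬ (∀ i j : ZMod m, G.Adj (v i) (v j) ↔ (j = i + 1 ∨ i = j + 1))

/-- `v` is a cut vertex of the connected graph `G`:
removing it disconnects the graph. -/
def IsCutVertex {V : Type} (G : SimpleGraph V) (v : V) : Prop :=
  G.Connected ∧ ¬ (G.induce {u | u ≠ v}).Connected

/-- `G` has no isolated vertices. -/
def NoIsolated {V : Type} (G : SimpleGraph V) : Prop := ∀ v, ∃ u, G.Adj v u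

/-- The faces of the clique complex `Δ(G)` having exactly `d` vertices. -/
def cliqueFace {V : Type} (G : SimpleGraph V) (d : ℕ) : Type :=
  {F : Finset V // G.IsClique ↑F ∧ F.card = d}

/-- The space of (augmented) simplicial `(d-1)`-chains of the clique complex of `G`
with coefficients in `K`: the free `K`-module on the faces with `d` vertices.
(In particular the `0`-th chain space is spanned by the empty face, so this chain
complex computes *reduced* (co)homology.) -/
def cliqueChain (K : Type) [Field K] {V : Type} (G : SimpleGraph V) (d : ℕ) : Type :=
  cliqueFace G d →₀ K

noncomputable instance (K : Type) [Field K] {V : Type} (G : SimpleGraph V) (d : ℕ) :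
    AddCommGroup (cliqueChain K G d) := Finsupp.instAddCommGroup

noncomputable instance (K : Type) [Field K] {V : Type} (G : SimpleGraph V) (d : ℕ) :
    Module K (cliqueChain K G d) := Finsupp.module _ _

/-- The simplicial boundary map of the clique complex of `G`. -/
noncomputable def cliqueBoundary (K : Type) [Field K] {V : Type} [LinearOrder V]
    (G : SimpleGraph V) (d : ℕ) :
    cliqueChain K G (d + 1) →ₗ[K] cliqueChain K G d :=
  Finsupp.lift (cliqueChain K G d) K (cliqueFace G (d + 1)) (fun F =>
    ∑ j : Fin (d + 1), ((-1 : K) ^ (j : ℕ)) •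
      ((Finsupp.single (⟨F.1.erase ((F.1.orderIsoOfFin F.2.2 j : F.1) : V),
        ⟨F.2.1.subset (by exact_mod_cast Finset.erase_subset _ _), by
          rw [Finset.card_erase_of_mem (F.1.orderIsoOfFin F.2.2 j).2, F.2.2]; omega⟩⟩
          -- card (d+1) - 1 = d
           :
            cliqueFace G d) 1) : cliqueChain K G d))

/-- The `i`-th reduced simplicial homology of the clique complex of `G`,
with coefficients in `K`. -/
noncomputable abbrev cliqueReducedHomology (K : Type) [Field K] {V : Type} [LinearOrder V]
    (G : SimpleGraph V) (i : ℕ) :=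
  ↥(LinearMap.ker (cliqueBoundary K G i)) ⧸
    (Submodule.comap (LinearMap.ker (cliqueBoundary K G i)).subtype
      (LinearMap.range (cliqueBoundary K G (i + 1))))

/-- The space of simplicial `(d-1)`-cochains: the dual of the chain space. -/
def cliqueCochain (K : Type) [Field K] {V : Type} (G : SimpleGraph V) (d : ℕ) : Type :=
  Module.Dual K (cliqueChain K G d)

noncomputable instance (K : Type) [Field K] {V : Type} (G : SimpleGraph V) (d : ℕ) :
    AddCommGroup (cliqueCochain K G d) := LinearMap.addCommGroup

noncomputable instance (K : Type) [Field K] {V : Type} (G : SimpleGraph V) (d : ℕ) :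
    Module K (cliqueCochain K G d) :=
  inferInstanceAs (Module K (Module.Dual K (cliqueChain K G d)))

/-- The simplicial coboundary map of the clique complex of `G`. -/
noncomputable def cliqueCoboundary (K : Type) [Field K] {V : Type} [LinearOrder V]
    (G : SimpleGraph V) (d : ℕ) :
    cliqueCochain K G d →ₗ[K] cliqueCochain K G (d + 1) :=
  (cliqueBoundary K G d).dualMap

/-- The `i`-th reduced simplicial cohomology of the clique complex of `G`,
with coefficients in `K`, defined via the dual (cochain) complex. -/
noncomputable abbrev cliqueReducedCohomology (K : Type) [Field K] {V : Type} [LinearOrder V]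
    (G : SimpleGraph V) (i : ℕ) :=
  ↥(LinearMap.ker (cliqueCoboundary K G (i + 1))) ⧸
    (Submodule.comap (LinearMap.ker (cliqueCoboundary K G (i + 1))).subtype
      (LinearMap.range (cliqueCoboundary K G i)))

/-!
In a chordal graph, fix a vertex `x` and a component `C` of the subgraph induced on the vertices
not adjacent to `x`. Two nonadjacent neighbours of `x` attached to `C` would close up, through a
shortest path with interior in `C`, to an induced cycle of length at least four; so the neighbours
of `x` attached to `C` form a clique. Hence a finite vertex set that is not a clique is covered by
two smaller sets which overlap in a clique and between them contain all of its cliques. The clique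
complex of a clique is a simplex or empty, and Mayer–Vietoris gives the vanishing of homology by
induction on the size of the vertex set. A chain involves only finitely many vertices, so cycles in
the clique complex of an arbitrary chordal graph are boundaries as well. Over a field, cohomology is
the dual of homology.
-/

lemma dist_getVert_getVert_of_length_eq_dist {V : Type*} {G : SimpleGraph V} {u v : V}
    {p : G.Walk u v} (hp : p.length = G.dist u v) {i j : ℕ} (hij : i ≤ j) (hj : j ≤ p.length) :
    G.dist (p.getVert i) (p.getVert j) = j - i := by
  have hsub : ((p.drop i).take (j - i)).IsSubwalk p :=
    (SimpleGraph.Walk.isSubwalk_take _ _).trans (SimpleGraph.Walk.isSubwalk_drop _ _)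
  have hlen := SimpleGraph.length_eq_dist_of_subwalk hp hsub
  have hend : (p.drop i).getVert (j - i) = p.getVert j := by
    rw [SimpleGraph.Walk.drop_getVert, Nat.add_sub_cancel' hij]
  rw [← hend, ← hlen, SimpleGraph.Walk.take_length, SimpleGraph.Walk.drop_length]
  omega

section Chordal

variable {V : Type} {G : SimpleGraph V}

lemma IsChordal.not_forall_adj_iff (hG : IsChordal G) {m : ℕ} (hm : 4 ≤ m) {f : ℕ → V}
    (hf : Set.InjOn f (Set.Iio m)) :
    ¬ ∀ i j, i < j → j < m → (G.Adj (f i) (f j) ↔ j = i + 1 ∨ i = 0 ∧ j + 1 = m) := by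
  intro hadj
  obtain ⟨n, rfl⟩ : ∃ n, m = n + 1 := ⟨m - 1, by omega⟩
  have hsucc (i j : Fin (n + 1)) :
      j = i + 1 ↔ (j : ℕ) = i + 1 ∨ (i : ℕ) = n ∧ (j : ℕ) = 0 := by
    simp only [Fin.ext_iff, Fin.val_add_one, Fin.val_last]
    grind
  refine hG (n + 1) hm (fun i : Fin (n + 1) => f i) (fun (i j : Fin (n + 1)) hij => ?_)
    fun (i j : Fin (n + 1)) => Iff.trans ?_ (or_congr (hsucc i j) (hsucc j i)).symm
  · exact Fin.ext (hf i.2 j.2 hij)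
  · rcases lt_trichotomy (i : ℕ) j with hij | hij | hij
    · grind
    · grind [G.irrefl]
    · grind [G.adj_comm]

lemma IsChordal.adj_of_reachable_induce (hG : IsChordal G) {x s t : V} {U : Set V}
    (hxU : x ∉ U) (hU : ∀ u ∈ U, G.Adj x u ↔ u = s ∨ u = t) (hs : s ∈ U) (ht : t ∈ U)
    (hst : s ≠ t) (hreach : (G.induce U).Reachable ⟨s, hs⟩ ⟨t, ht⟩) : G.Adj s t := by
  by_contra hnadj
  obtain ⟨p, hp⟩ := hreach.exists_walk_length_eq_dist
  have hdist {i j : ℕ} (hij : i ≤ j) (hj : j ≤ p.length) :=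
    dist_getVert_getVert_of_length_eq_dist hp hij hj
  have hlength : 1 < p.length :=
    hp ▸ hreach.one_lt_dist_of_ne_of_not_adj (by simpa using hst) hnadj
  have hinj {i j : ℕ} (hi : i ≤ p.length) (hj : j ≤ p.length)
      (hij : p.getVert i = p.getVert j) : i = j :=
    (p.isPath_of_length_eq_dist hp).getVert_injOn hi hj hij
  let f : ℕ → V := fun
    | 0 => x
    | k + 1 => p.getVert k
  refine hG.not_forall_adj_iff (m := p.length + 2) (f := f) (by omega) ?_ ?_
  · rintro (_ | i) hi (_ | j) hj hij
    · rfl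
    · exact absurd ((congrArg (· ∈ U) hij).mpr (p.getVert j).2) hxU
    · exact absurd ((congrArg (· ∈ U) hij).mp (p.getVert i).2) hxU
    · rw [hinj (by grind) (by grind) (Subtype.ext hij)]
  · rintro (_ | i) (_ | j) hij hj
    · omega
    · have hjs : (p.getVert j : V) = s ↔ j = 0 :=
        ⟨fun h => hinj (by omega) (by omega) (by ext; simpa using h), by rintro rfl; simp⟩
      have hjt : (p.getVert j : V) = t ↔ j = p.length :=
        ⟨fun h => hinj (by omega) le_rfl (by ext; simpa using h), by rintro rfl; simp⟩
      simp only [f, hU _ (p.getVert j).2, hjs, hjt, true_and]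
      omega
    · omega
    · simp only [f]
      rw [← SimpleGraph.induce_adj, ← SimpleGraph.dist_eq_one_iff_adj,
        hdist (by omega) (by omega)]
      omega

lemma IsChordal.isClique_neighbors_of_component (hG : IsChordal G) {x : V} {N : Set V}
    (hN : ∀ a ∈ N, a ≠ x ∧ ¬ G.Adj x a) (C : (G.induce N).ConnectedComponent) :
    G.IsClique {s | G.Adj x s ∧ ∃ c ∈ C.supp, G.Adj s c} := by
  rintro s ⟨hxs, c, hc, hsc⟩ t ⟨hxt, d, hd, htd⟩ hst
  let U : Set V := {s, t} ∪ N
  have hsU : s ∈ U := by simp [U]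
  have htU : t ∈ U := by simp [U]
  have hNU : N ≤ U := Set.subset_union_right
  have hxU : x ∉ U := by grind [G.irrefl]
  have hU : ∀ u ∈ U, G.Adj x u ↔ u = s ∨ u = t := by grind
  have hsc' : (G.induce U).Reachable ⟨s, hsU⟩ ⟨c, hNU c.2⟩ :=
    SimpleGraph.Adj.reachable (SimpleGraph.induce_adj.2 hsc)
  have hcd : (G.induce U).Reachable ⟨c, hNU c.2⟩ ⟨d, hNU d.2⟩ :=
    (SimpleGraph.ConnectedComponent.exact (hc.trans hd.symm)).map
      (SimpleGraph.induceHomOfLE G hNU).toHom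
  have hdt : (G.induce U).Reachable ⟨d, hNU d.2⟩ ⟨t, htU⟩ :=
    SimpleGraph.Adj.reachable (SimpleGraph.induce_adj.2 htd.symm)
  exact hG.adj_of_reachable_induce hxU hU hsU htU hst (hsc'.trans (hcd.trans hdt))

lemma mem_image_supp_of_adj {N : Set V} {C : (G.induce N).ConnectedComponent} {c b : V}
    (hc : c ∈ ((↑) : N → V) '' C.supp) (hb : b ∈ N) (hcb : G.Adj c b) :
    b ∈ ((↑) : N → V) '' C.supp := by
  obtain ⟨c, hc, rfl⟩ := hc
  have hadj : (G.induce N).Adj c ⟨b, hb⟩ := hcb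
  exact ⟨⟨b, hb⟩, C.mem_supp_of_adj_mem_supp hc hadj, rfl⟩

lemma subset_union_or_subset_sdiff_of_isClique {W C S F : Set V}
    (hC : ∀ c ∈ C, ∀ b ∈ W, G.Adj c b → b ∈ C ∪ S) (hFW : F ⊆ W) (hF : G.IsClique F) :
    F ⊆ C ∪ S ∨ F ⊆ W \ C := by
  by_cases hFC : ∃ c ∈ F, c ∈ C
  · obtain ⟨c, hcF, hcC⟩ := hFC
    refine .inl fun b hb => ?_
    obtain rfl | hcb := eq_or_ne c b
    · exact .inl hcC
    · exact hC c hcC b (hFW hb) (hF hcF hb hcb)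
  · exact .inr fun b hb => ⟨hFW hb, fun hbC => hFC ⟨b, hb, hbC⟩⟩

lemma IsChordal.exists_isClique_inter_of_not_isClique (hG : IsChordal G) {W : Set V}
    (hW : ¬ G.IsClique W) :
    ∃ A ⊂ W, ∃ B ⊂ W, G.IsClique (A ∩ B) ∧ ∀ F ⊆ W, G.IsClique F → F ⊆ A ∨ F ⊆ B := by
  obtain ⟨x, hx, z, hz, hxz, hnadj⟩ : ∃ x ∈ W, ∃ z ∈ W, x ≠ z ∧ ¬ G.Adj x z := by
    simpa [SimpleGraph.IsClique, Set.Pairwise] using hW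
  let N : Set V := {a ∈ W | a ≠ x ∧ ¬ G.Adj x a}
  let z' : N := ⟨z, hz, hxz.symm, hnadj⟩
  let component := (G.induce N).connectedComponentMk z'
  let C : Set V := (↑) '' component.supp
  let S : Set V := {s ∈ W | G.Adj x s ∧ ∃ c ∈ C, G.Adj s c}
  have hCN : C ⊆ N := Subtype.coe_image_subset N component.supp
  have hzC : z ∈ C := ⟨z', rfl, rfl⟩
  have hC : ∀ c ∈ C, ∀ b ∈ W, G.Adj c b → b ∈ C ∪ S := fun c hc b hb hcb => by
    by_cases hxb : G.Adj x b
    · exact .inr ⟨hb, hxb, c, hc, hcb.symm⟩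
    · exact .inl (mem_image_supp_of_adj hc ⟨hb, fun h => (hCN hc).2.2 (h ▸ hcb.symm), hxb⟩ hcb)
  have hS : G.IsClique S := by
    refine (hG.isClique_neighbors_of_component (fun _ ha => ha.2) component).subset ?_
    rintro s ⟨-, hxs, _, ⟨c, hc, rfl⟩, hsc⟩
    exact ⟨hxs, c, hc, hsc⟩
  have hCSW : C ∪ S ⊆ W := Set.union_subset (hCN.trans (Set.sep_subset _ _)) (Set.sep_subset _ _)
  have hxCS : x ∉ C ∪ S := by
    rintro (hxC | hxS)
    · exact (hCN hxC).2.1 rfl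
    · exact hxS.2.1.ne rfl
  have hinter : (C ∪ S) ∩ (W \ C) ⊆ S := fun a ha => ha.1.resolve_left ha.2.2
  exact ⟨C ∪ S, (Set.ssubset_iff_of_subset hCSW).2 ⟨x, hx, hxCS⟩,
    W \ C, (Set.ssubset_iff_of_subset Set.sdiff_subset).2 ⟨z, hz, fun h => h.2 hzC⟩,
    hS.subset hinter, fun _ hFW hF => subset_union_or_subset_sdiff_of_isClique hC hFW hF⟩

end Chordal

section SimplicialChains

variable {V : Type*} [LinearOrder V]

/-- The incidence sign of a vertex `v` relative to a set `F` of vertices: `(-1)` to the number of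
elements of `F` below `v`. -/
def vertexSign (R : Type*) [Ring R] (v : V) (F : Finset V) : R :=
  (-1) ^ (F.filter (· < v)).card

lemma vertexSign_mul_self {R : Type*} [Ring R] (v : V) (F : Finset V) :
    vertexSign R v F * vertexSign R v F = 1 := by
  simp [vertexSign, ← pow_add]

lemma vertexSign_insert {R : Type*} [Ring R] {u : V} {F : Finset V} (hu : u ∉ F) (v : V) :
    vertexSign R v (insert u F) = if u < v then -vertexSign R v F else vertexSign R v F := by
  rw [vertexSign, Finset.filter_insert]
  split_ifs
  · rw [Finset.card_insert_of_notMem (by simp [hu]), pow_succ, mul_neg_one, vertexSign]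
  · rfl

lemma vertexSign_insert_self {R : Type*} [Ring R] {v : V} {F : Finset V} (hv : v ∉ F) :
    vertexSign R v (insert v F) = vertexSign R v F := by
  rw [vertexSign_insert hv, if_neg (lt_irrefl v)]

lemma vertexSign_insert_mul_vertexSign_insert {R : Type*} [Ring R] {u v : V} {F : Finset V}
    (huv : u ≠ v) (hu : u ∉ F) (hv : v ∉ F) :
    vertexSign R u (insert v F) * vertexSign R v (insert u F) =
      -(vertexSign R u F * vertexSign R v F) := by
  rw [vertexSign_insert hu, vertexSign_insert hv]
  rcases huv.lt_or_gt with h | h <;> simp [h, h.not_gt]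

lemma vertexSign_orderIsoOfFin {R : Type*} [Ring R] {F : Finset V} {d : ℕ} (hF : F.card = d)
    (j : Fin d) : vertexSign R (F.orderIsoOfFin hF j : V) F = (-1) ^ (j : ℕ) := by
  have hbelow : F.filter (· < (F.orderIsoOfFin hF j : V)) =
      (Finset.Iio j).map (F.orderEmbOfFin hF).toEmbedding := by
    calc F.filter (· < (F.orderIsoOfFin hF j : V))
      _ = (Finset.univ.map (F.orderEmbOfFin hF).toEmbedding).filter
          (· < F.orderEmbOfFin hF j) := by
        rw [Finset.map_orderEmbOfFin_univ, Finset.coe_orderIsoOfFin_apply]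
      _ = (Finset.Iio j).map (F.orderEmbOfFin hF).toEmbedding := by
        rw [Finset.filter_map]
        congr 1
        ext
        simp
  rw [vertexSign, hbelow, Finset.card_map, Fin.card_Iio]

variable (R : Type*) [CommRing R]

/-- The boundary map of the augmented chain complex of the full simplex on `V`, whose chains in all
dimensions are the finitely supported functions on `Finset V`. -/
noncomputable def simplexBoundary : (Finset V →₀ R) →ₗ[R] Finset V →₀ R :=
  Finsupp.linearCombination R fun F =>
    ∑ v ∈ F, vertexSign R v F • Finsupp.single (F.erase v) 1

/-- The cone operator with apex `w` on the chains of the full simplex on `V`; it is the usual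
contracting homotopy. -/
noncomputable def simplexCone (w : V) : (Finset V →₀ R) →ₗ[R] Finset V →₀ R :=
  Finsupp.linearCombination R fun F =>
    if w ∈ F then 0 else vertexSign R w F • Finsupp.single (insert w F) 1

variable {R}

lemma simplexBoundary_single (F : Finset V) :
    simplexBoundary R (Finsupp.single F 1) =
      ∑ v ∈ F, vertexSign R v F • Finsupp.single (F.erase v) 1 := by
  simp [simplexBoundary]

lemma simplexCone_single_of_mem {w : V} {F : Finset V} (hw : w ∈ F) :
    simplexCone R w (Finsupp.single F 1) = 0 := by
  simp [simplexCone, hw]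

lemma simplexCone_single_of_notMem {w : V} {F : Finset V} (hw : w ∉ F) :
    simplexCone R w (Finsupp.single F 1) =
      vertexSign R w F • Finsupp.single (insert w F) 1 := by
  simp [simplexCone, hw]

lemma simplexBoundary_simplexCone_single (w : V) (F : Finset V) :
    simplexBoundary R (simplexCone R w (Finsupp.single F 1)) =
      Finsupp.single F 1 - simplexCone R w (simplexBoundary R (Finsupp.single F 1)) := by
  rw [simplexBoundary_single, map_sum]
  simp_rw [map_smul]
  by_cases hw : w ∈ F
  · obtain ⟨H, hwH, rfl⟩ : ∃ H, w ∉ H ∧ insert w H = F :=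
      ⟨F.erase w, Finset.notMem_erase w F, Finset.insert_erase hw⟩
    have hvanish (v : V) (hv : v ∈ H) : vertexSign R v (insert w H) •
        simplexCone R w (Finsupp.single ((insert w H).erase v) 1) = 0 := by
      rw [simplexCone_single_of_mem (by grind), smul_zero]
    rw [simplexCone_single_of_mem hw, map_zero, Finset.sum_insert hwH,
      Finset.sum_eq_zero hvanish, Finset.erase_insert hwH, simplexCone_single_of_notMem hwH,
      vertexSign_insert_self hwH, smul_smul, vertexSign_mul_self, one_smul, add_zero, sub_self]
  · have hanti (v : V) (hv : v ∈ F) : vertexSign R v F •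
        simplexCone R w (Finsupp.single (F.erase v) 1) =
        -(vertexSign R w F • vertexSign R v (insert w F) •
          Finsupp.single ((insert w F).erase v) 1) := by
      obtain ⟨H, hvH, rfl⟩ : ∃ H, v ∉ H ∧ insert v H = F :=
        ⟨F.erase v, Finset.notMem_erase v F, Finset.insert_erase hv⟩
      obtain ⟨hwv, hwH⟩ : w ≠ v ∧ w ∉ H := by simpa using hw
      rw [Finset.erase_insert hvH, Finset.insert_comm, Finset.erase_insert (by grind),
        simplexCone_single_of_notMem hwH, vertexSign_insert_self hvH,
        vertexSign_insert_self (by grind), smul_smul, smul_smul, ← neg_smul,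
        vertexSign_insert_mul_vertexSign_insert hwv hwH hvH, neg_neg, mul_comm]
    rw [simplexCone_single_of_notMem hw, map_smul, simplexBoundary_single, Finset.sum_insert hw,
      Finset.erase_insert hw, vertexSign_insert_self hw, smul_add, smul_smul,
      vertexSign_mul_self, one_smul, Finset.sum_congr rfl hanti, Finset.sum_neg_distrib,
      sub_neg_eq_add, Finset.smul_sum]

lemma simplexBoundary_simplexCone (w : V) (z : Finset V →₀ R) :
    simplexBoundary R (simplexCone R w z) = z - simplexCone R w (simplexBoundary R z) := by
  have h : simplexBoundary R ∘ₗ simplexCone R w =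
      LinearMap.id - simplexCone R w ∘ₗ simplexBoundary R := by
    ext1 F
    ext1
    exact simplexBoundary_simplexCone_single w F
  exact LinearMap.congr_fun h z

lemma simplexBoundary_simplexBoundary (z : Finset V →₀ R) :
    simplexBoundary R (simplexBoundary R z) = 0 := by
  induction z using Finsupp.induction_linear with
  | zero => simp
  | add y z hy hz => simp [hy, hz]
  | single F c =>
    rw [← Finsupp.smul_single_one, map_smul, map_smul]
    suffices h : simplexBoundary R (simplexBoundary R (Finsupp.single F 1)) = 0 by
      rw [h, smul_zero]
    -- Up to sign, every nonempty face is a cone over a smaller one, and `∂∂` commutes with cones.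
    induction F using Finset.induction_on with
    | empty => simp [simplexBoundary_single]
    | insert w F hw ih =>
      have hcone : Finsupp.single (insert w F) (1 : R) =
          vertexSign R w F • simplexCone R w (Finsupp.single F 1) := by
        rw [simplexCone_single_of_notMem hw, smul_smul, vertexSign_mul_self, one_smul]
      rw [hcone, map_smul, map_smul, simplexBoundary_simplexCone, map_sub,
        simplexBoundary_simplexCone, ih, map_zero, sub_zero, sub_self, smul_zero]

end SimplicialChains

section FaceChains

variable {R : Type*} [CommRing R] {V : Type*}

variable (R) in
/-- The augmented chains of a simplicial complex `Δ` supported on faces with `d` vertices, that is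
the reduced simplicial `(d - 1)`-chains. A complex is encoded as a lower set of finite vertex sets,
so that the empty face belongs to every nonempty complex. -/
def faceChains (Δ : LowerSet (Finset V)) (d : ℕ) : Submodule R (Finset V →₀ R) :=
  Finsupp.supported R R {F | F ∈ Δ ∧ F.card = d}

lemma mem_faceChains {Δ : LowerSet (Finset V)} {d : ℕ} {z : Finset V →₀ R} :
    z ∈ faceChains R Δ d ↔ ∀ F ∈ z.support, F ∈ Δ ∧ F.card = d :=
  Finsupp.mem_supported R z

lemma faceChains_mono {Δ₁ Δ₂ : LowerSet (Finset V)} (h : Δ₁ ≤ Δ₂) (d : ℕ) :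
    faceChains R Δ₁ d ≤ faceChains R Δ₂ d :=
  Finsupp.supported_mono fun _ hF => ⟨h hF.1, hF.2⟩

lemma faceChains_inf (Δ₁ Δ₂ : LowerSet (Finset V)) (d : ℕ) :
    faceChains R (Δ₁ ⊓ Δ₂) d = faceChains R Δ₁ d ⊓ faceChains R Δ₂ d := by
  rw [faceChains, faceChains, faceChains, ← Finsupp.supported_inter]
  congr 1
  ext F
  exact and_and_right

lemma faceChains_sup (Δ₁ Δ₂ : LowerSet (Finset V)) (d : ℕ) :
    faceChains R (Δ₁ ⊔ Δ₂) d = faceChains R Δ₁ d ⊔ faceChains R Δ₂ d := by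
  rw [faceChains, faceChains, faceChains, ← Finsupp.supported_union]
  congr 1
  ext F
  exact or_and_right

lemma faceChains_le_comap {Δ₁ Δ₂ : LowerSet (Finset V)} {d e : ℕ}
    {f : (Finset V →₀ R) →ₗ[R] Finset V →₀ R}
    (hf : ∀ F ∈ Δ₁, F.card = d → f (Finsupp.single F 1) ∈ faceChains R Δ₂ e) :
    faceChains R Δ₁ d ≤ (faceChains R Δ₂ e).comap f := by
  rw [faceChains, Finsupp.supported_eq_span_single, Submodule.span_le]
  rintro _ ⟨F, ⟨hF, hd⟩, rfl⟩
  exact hf F hF hd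

variable [LinearOrder V]

lemma simplexBoundary_mem_faceChains {Δ : LowerSet (Finset V)} {d : ℕ} {z : Finset V →₀ R}
    (hz : z ∈ faceChains R Δ (d + 1)) : simplexBoundary R z ∈ faceChains R Δ d := by
  refine faceChains_le_comap (fun F hF hd => ?_) hz
  rw [simplexBoundary_single]
  refine Submodule.sum_mem _ fun v hv => Submodule.smul_mem _ _ ?_
  refine Finsupp.single_mem_supported R 1 ⟨Δ.lower (F.erase_subset v) hF, ?_⟩
  rw [Finset.card_erase_of_mem hv, hd, Nat.add_sub_cancel]

lemma simplexCone_mem_faceChains {Δ : LowerSet (Finset V)} {w : V}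
    (hw : ∀ F ∈ Δ, insert w F ∈ Δ) {d : ℕ} {z : Finset V →₀ R} (hz : z ∈ faceChains R Δ d) :
    simplexCone R w z ∈ faceChains R Δ (d + 1) := by
  refine faceChains_le_comap (fun F hF hd => ?_) hz
  by_cases hwF : w ∈ F
  · rw [simplexCone_single_of_mem hwF]
    exact zero_mem _
  · rw [simplexCone_single_of_notMem hwF]
    refine Submodule.smul_mem _ _ (Finsupp.single_mem_supported R 1 ⟨hw F hF, ?_⟩)
    rw [Finset.card_insert_of_notMem hwF, hd]

variable (R) in
/-- Exactness of the augmented chain complex of `Δ` at the faces with `d` vertices, that is,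
vanishing of the reduced homology of `Δ` in degree `d - 1`. -/
def IsAcyclicAt (Δ : LowerSet (Finset V)) (d : ℕ) : Prop :=
  ∀ z ∈ faceChains R Δ d, simplexBoundary R z = 0 →
    ∃ y ∈ faceChains R Δ (d + 1), simplexBoundary R y = z

lemma isAcyclicAt_of_cone {Δ : LowerSet (Finset V)} {w : V} (hw : ∀ F ∈ Δ, insert w F ∈ Δ)
    (d : ℕ) : IsAcyclicAt R Δ d := fun z hz hcycle =>
  ⟨simplexCone R w z, simplexCone_mem_faceChains hw hz, by
    rw [simplexBoundary_simplexCone, hcycle, map_zero, sub_zero]⟩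

/-- Mayer–Vietoris: a cycle splits as `z₁ + z₂`, and the common boundary `∂z₁ = -∂z₂` is a cycle of
the intersection; filling it there turns `z₁` and `z₂` into cycles. -/
lemma IsAcyclicAt.sup {Δ₁ Δ₂ : LowerSet (Finset V)} {d : ℕ} (h₁ : IsAcyclicAt R Δ₁ (d + 1))
    (h₂ : IsAcyclicAt R Δ₂ (d + 1)) (hinf : IsAcyclicAt R (Δ₁ ⊓ Δ₂) d) :
    IsAcyclicAt R (Δ₁ ⊔ Δ₂) (d + 1) := by
  intro z hz hcycle
  rw [faceChains_sup] at hz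
  obtain ⟨z₁, hz₁, z₂, hz₂, rfl⟩ := Submodule.mem_sup.1 hz
  have hneg : simplexBoundary R z₁ = -simplexBoundary R z₂ :=
    eq_neg_of_add_eq_zero_left (by rw [← map_add, hcycle])
  have hcommon : simplexBoundary R z₁ ∈ faceChains R (Δ₁ ⊓ Δ₂) d := by
    rw [faceChains_inf]
    refine ⟨simplexBoundary_mem_faceChains hz₁, ?_⟩
    rw [hneg]
    exact neg_mem (simplexBoundary_mem_faceChains hz₂)
  obtain ⟨b, hb, hbz⟩ := hinf _ hcommon (simplexBoundary_simplexBoundary z₁)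
  rw [faceChains_inf] at hb
  obtain ⟨y₁, hy₁, hyz₁⟩ := h₁ (z₁ - b) (sub_mem hz₁ hb.1) (by rw [map_sub, hbz, sub_self])
  obtain ⟨y₂, hy₂, hyz₂⟩ := h₂ (z₂ + b) (add_mem hz₂ hb.2)
    (by rw [map_add, hbz, hneg, add_neg_cancel])
  refine ⟨y₁ + y₂, ?_, by rw [map_add, hyz₁, hyz₂]; abel⟩
  rw [faceChains_sup]
  exact Submodule.add_mem_sup hy₁ hy₂

end FaceChains

section CliqueComplex

variable {V : Type*} {G : SimpleGraph V}

variable (G) in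
/-- The clique complex of the subgraph of `G` induced on `W`, including the empty face. -/
def cliqueComplex (W : Set V) : LowerSet (Finset V) where
  carrier := {F | ↑F ⊆ W ∧ G.IsClique F}
  lower' _ _ hle hF :=
    ⟨(Finset.coe_subset.2 hle).trans hF.1, hF.2.subset (Finset.coe_subset.2 hle)⟩

lemma mem_cliqueComplex {W : Set V} {F : Finset V} :
    F ∈ cliqueComplex G W ↔ ↑F ⊆ W ∧ G.IsClique F :=
  Iff.rfl

lemma cliqueComplex_mono {A B : Set V} (h : A ⊆ B) : cliqueComplex G A ≤ cliqueComplex G B :=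
  fun _ hF => ⟨hF.1.trans h, hF.2⟩

lemma cliqueComplex_inter (A B : Set V) :
    cliqueComplex G (A ∩ B) = cliqueComplex G A ⊓ cliqueComplex G B := by
  ext F
  exact (and_congr_left' Set.subset_inter_iff).trans and_and_right

variable {R : Type*} [CommRing R] [LinearOrder V]

lemma isAcyclicAt_cliqueComplex_of_isClique {W : Set V} (hW : G.IsClique W) (d : ℕ) :
    IsAcyclicAt R (cliqueComplex G W) (d + 1) := by
  rcases W.eq_empty_or_nonempty with rfl | ⟨w, hw⟩
  · refine fun z hz _ => ⟨0, zero_mem _, ?_⟩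
    have hz0 : z.support = ∅ := Finset.eq_empty_of_forall_notMem fun F hF => by
      obtain ⟨⟨hF, -⟩, hd⟩ := mem_faceChains.1 hz F hF
      simp_all
    rw [Finsupp.support_eq_empty.1 hz0, map_zero]
  · refine isAcyclicAt_of_cone (w := w) (fun F hF => ?_) _
    have hins : (↑(insert w F) : Set V) ⊆ W := by
      rw [Finset.coe_insert]
      exact Set.insert_subset hw hF.1
    exact ⟨hins, hW.subset hins⟩

lemma isAcyclicAt_cliqueComplex_of_forall_finset {W : Set V} {d : ℕ}
    (h : ∀ W' : Finset V, ↑W' ⊆ W → IsAcyclicAt R (cliqueComplex G W') d) :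
    IsAcyclicAt R (cliqueComplex G W) d := by
  intro z hz hcycle
  let W' : Finset V := z.support.biUnion id
  have hW' : ↑W' ⊆ W := by
    simp only [W', Finset.coe_biUnion, Set.iUnion_subset_iff]
    exact fun F hF => (mem_faceChains.1 hz F hF).1.1
  have hz' : z ∈ faceChains R (cliqueComplex G W') d := mem_faceChains.2 fun F hF =>
    ⟨⟨by exact_mod_cast Finset.subset_biUnion_of_mem id hF, (mem_faceChains.1 hz F hF).1.2⟩,
      (mem_faceChains.1 hz F hF).2⟩
  obtain ⟨y, hy, hyz⟩ := h W' hW' z hz' hcycle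
  exact ⟨y, faceChains_mono (cliqueComplex_mono hW') _ hy, hyz⟩

end CliqueComplex

section ChordalHomology

variable {R : Type*} [CommRing R] {V : Type} [LinearOrder V] {G : SimpleGraph V}

lemma IsChordal.isAcyclicAt_cliqueComplex_finset (hG : IsChordal G) (W : Finset V) (d : ℕ) :
    IsAcyclicAt R (cliqueComplex G W) (d + 2) := by
  induction W using Finset.strongInduction with
  | H W ih =>
  by_cases hW : G.IsClique (W : Set V)
  · exact isAcyclicAt_cliqueComplex_of_isClique hW (d + 1)
  obtain ⟨A, hAW, B, hBW, hAB, hcover⟩ := hG.exists_isClique_inter_of_not_isClique hW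
  have hunion : cliqueComplex G W = cliqueComplex G A ⊔ cliqueComplex G B := by
    refine le_antisymm (fun F hF => ?_)
      (sup_le (cliqueComplex_mono hAW.subset) (cliqueComplex_mono hBW.subset))
    exact (hcover F hF.1 hF.2).imp (⟨·, hF.2⟩) (⟨·, hF.2⟩)
  lift A to Finset V using W.finite_toSet.subset hAW.subset
  lift B to Finset V using W.finite_toSet.subset hBW.subset
  rw [hunion]
  refine (ih A (Finset.coe_ssubset.1 hAW)).sup (ih B (Finset.coe_ssubset.1 hBW)) ?_
  rw [← cliqueComplex_inter]
  exact isAcyclicAt_cliqueComplex_of_isClique hAB d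

lemma IsChordal.isAcyclicAt_cliqueComplex (hG : IsChordal G) (W : Set V) (d : ℕ) :
    IsAcyclicAt R (cliqueComplex G W) (d + 2) :=
  isAcyclicAt_cliqueComplex_of_forall_finset fun W' _ =>
    hG.isAcyclicAt_cliqueComplex_finset W' d

end ChordalHomology

section Comparison

variable {K : Type} [Field K] {V : Type} {G : SimpleGraph V} {d : ℕ}

variable (K) in
/-- The chain of the clique complex of `G` given by a single face. -/
noncomputable def cliqueChain.single (F : cliqueFace G d) : cliqueChain K G d :=
  Finsupp.single F 1

variable (K G d) in
/-- The chains of the clique complex of `G`, viewed as chains of the full simplex on `V`. -/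
noncomputable def cliqueChainInclusion : cliqueChain K G d →ₗ[K] Finset V →₀ K :=
  Finsupp.lmapDomain K K (Subtype.val : cliqueFace G d → Finset V)

lemma cliqueChainInclusion_single (F : cliqueFace G d) :
    cliqueChainInclusion K G d (cliqueChain.single K F) = Finsupp.single F.1 1 :=
  Finsupp.mapDomain_single

lemma cliqueChainInclusion_injective : Function.Injective (cliqueChainInclusion K G d) :=
  Finsupp.mapDomain_injective Subtype.val_injective

lemma range_cliqueChainInclusion :
    LinearMap.range (cliqueChainInclusion K G d) =
      faceChains K (cliqueComplex G Set.univ) d := by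
  refine (Finsupp.range_lmapDomain (R := K) (Subtype.val : cliqueFace G d → Finset V)).trans ?_
  rw [faceChains, Finsupp.supported_eq_span_single]
  congr 1
  ext z
  simp [mem_cliqueComplex]

variable [LinearOrder V]

/-- The face of `F` obtained by deleting its `j`-th vertex in increasing order. -/
def cliqueFace.deleteNth (F : cliqueFace G (d + 1)) (j : Fin (d + 1)) : cliqueFace G d :=
  ⟨F.1.erase (F.1.orderIsoOfFin F.2.2 j),
    F.2.1.subset (Finset.coe_subset.2 (Finset.erase_subset _ _)), by
      rw [Finset.card_erase_of_mem (F.1.orderIsoOfFin F.2.2 j).2, F.2.2, Nat.add_sub_cancel]⟩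

lemma cliqueBoundary_single (F : cliqueFace G (d + 1)) :
    cliqueBoundary K G d (cliqueChain.single K F) =
      ∑ j : Fin (d + 1), (-1 : K) ^ (j : ℕ) • cliqueChain.single K (F.deleteNth j) := by
  have hlift := Finsupp.sum_single_index (a := F) (b := (1 : K))
    (h := fun F c => c • ∑ j : Fin (d + 1), (-1 : K) ^ (j : ℕ) •
      cliqueChain.single K (F.deleteNth j)) (zero_smul K _)
  exact hlift.trans (one_smul K _)

lemma cliqueChainInclusion_cliqueBoundary_single (F : cliqueFace G (d + 1)) :
    cliqueChainInclusion K G d (cliqueBoundary K G d (cliqueChain.single K F)) =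
      simplexBoundary K (Finsupp.single F.1 1) := by
  let e := F.1.orderIsoOfFin F.2.2
  let face (v : V) : Finset V →₀ K := vertexSign K v F.1 • Finsupp.single (F.1.erase v) 1
  calc cliqueChainInclusion K G d (cliqueBoundary K G d (cliqueChain.single K F))
    _ = ∑ j : Fin (d + 1), face (e j) := by
      simp_rw [cliqueBoundary_single, map_sum, map_smul, cliqueChainInclusion_single, face, e,
        vertexSign_orderIsoOfFin]
      rfl
    _ = ∑ v : F.1, face v := e.toEquiv.sum_comp fun v : F.1 => face v
    _ = ∑ v ∈ F.1, face v := Finset.sum_coe_sort F.1 face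
    _ = simplexBoundary K (Finsupp.single F.1 1) := (simplexBoundary_single F.1).symm

lemma cliqueChainInclusion_cliqueBoundary (z : cliqueChain K G (d + 1)) :
    cliqueChainInclusion K G d (cliqueBoundary K G d z) =
      simplexBoundary K (cliqueChainInclusion K G (d + 1) z) := by
  have h : cliqueChainInclusion K G d ∘ₗ cliqueBoundary K G d =
      simplexBoundary K ∘ₗ cliqueChainInclusion K G (d + 1) := by
    refine Finsupp.lhom_ext' fun F => LinearMap.ext_ring ?_
    refine (cliqueChainInclusion_cliqueBoundary_single F).trans ?_
    exact congrArg _ (cliqueChainInclusion_single F).symm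
  exact LinearMap.congr_fun h z

lemma IsAcyclicAt.ker_cliqueBoundary_le_range
    (h : IsAcyclicAt K (cliqueComplex G Set.univ) (d + 1)) :
    LinearMap.ker (cliqueBoundary K G d) ≤ LinearMap.range (cliqueBoundary K G (d + 1)) := by
  intro z hz
  obtain ⟨y, hy, hyz⟩ := h (cliqueChainInclusion K G (d + 1) z)
    (range_cliqueChainInclusion (K := K) ▸ LinearMap.mem_range_self _ z)
    (by rw [← cliqueChainInclusion_cliqueBoundary, LinearMap.mem_ker.1 hz, map_zero])
  rw [← range_cliqueChainInclusion] at hy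
  obtain ⟨y, rfl⟩ := hy
  exact ⟨y, cliqueChainInclusion_injective (by rw [cliqueChainInclusion_cliqueBoundary, hyz])⟩

lemma subsingleton_cliqueReducedHomology
    (h : LinearMap.ker (cliqueBoundary K G d) ≤ LinearMap.range (cliqueBoundary K G (d + 1))) :
    Subsingleton (cliqueReducedHomology K G d) := by
  rwa [Submodule.Quotient.subsingleton_iff, Submodule.comap_subtype_eq_top]

lemma subsingleton_cliqueReducedCohomology
    (h : LinearMap.ker (cliqueBoundary K G d) ≤ LinearMap.range (cliqueBoundary K G (d + 1))) :
    Subsingleton (cliqueReducedCohomology K G d) := by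
  rw [Submodule.Quotient.subsingleton_iff, Submodule.comap_subtype_eq_top]
  calc LinearMap.ker (cliqueBoundary K G (d + 1)).dualMap
    _ = (LinearMap.range (cliqueBoundary K G (d + 1))).dualAnnihilator :=
      LinearMap.ker_dualMap_eq_dualAnnihilator_range _
    _ ≤ (LinearMap.ker (cliqueBoundary K G d)).dualAnnihilator :=
      Submodule.dualAnnihilator_anti h
    _ = LinearMap.range (cliqueBoundary K G d).dualMap :=
      (LinearMap.range_dualMap_eq_dualAnnihilator_ker _).symm

end Comparison

theorem chordal_clique_complex_reduced_homology_vanishes_general (K : Type) [Field K]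
    {V : Type} [LinearOrder V] (G : SimpleGraph V) (hch : IsChordal G) :
    ∀ i : ℕ, i ≠ 0 →
      Subsingleton (cliqueReducedHomology K G i) ∧
      Subsingleton (cliqueReducedCohomology K G i) := by
  intro i hi
  obtain ⟨d, rfl⟩ := Nat.exists_eq_succ_of_ne_zero hi
  have hexact := (hch.isAcyclicAt_cliqueComplex (R := K) Set.univ d).ker_cliqueBoundary_le_range
  exact ⟨subsingleton_cliqueReducedHomology hexact, subsingleton_cliqueReducedCohomology hexact⟩

/-- **Lemma 3.2.** If `G` is a chordal finite simple graph, then the reduced simplicial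
homology and cohomology of its clique complex `Δ(G)` with coefficients in any field `K`
vanish in every degree `i ≠ 0`. -/
theorem chordal_clique_complex_reduced_homology_vanishes (K : Type) [Field K]
    {V : Type} [Fintype V] [LinearOrder V] (G : SimpleGraph V) (hch : IsChordal G) :
    ∀ i : ℕ, i ≠ 0 →
      Subsingleton (cliqueReducedHomology K G i) ∧
      Subsingleton (cliqueReducedCohomology K G i) :=
  chordal_clique_complex_reduced_homology_vanishes_general K G hch
end

section
/- For any given positive integers s < m and any field K, there exists a finite simple graph G with no isolated vertices and matching number ν(G) = m such that g_{I(G)}(k) = 0 if and only if k ∈ {s+1,…,m}. -/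
open MvPolynomial

/-- The squarefree monomial `∏ i ∈ F, xᵢ`. -/
noncomputable def sqMon (K : Type) [Field K] {σ : Type} (F : Finset σ) :
    MvPolynomial σ K := ∏ i ∈ F, X i

/-- `I` is a squarefree monomial ideal if it is generated by squarefree monomials. -/
def IsSqfreeMonomialIdeal (K : Type) [Field K] {σ : Type}
    (I : Ideal (MvPolynomial σ K)) : Prop :=
  ∃ 𝒢 : Set (Finset σ), I = Ideal.span ((sqMon K) '' 𝒢)

/-- The `k`-th squarefree power `I^[k]`: the ideal generated by all squarefree
monomials belonging to `I^k`. -/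
noncomputable def sqfreePower (K : Type) [Field K] {σ : Type}
    (I : Ideal (MvPolynomial σ K)) (k : ℕ) : Ideal (MvPolynomial σ K) :=
  Ideal.span {m | ∃ F : Finset σ, m = sqMon K F ∧ m ∈ I ^ k}

/-- The monomial grade `ν(I)`: the largest `k` with `I^[k] ≠ (0)`. -/
noncomputable def monGrade (K : Type) [Field K] {σ : Type}
    (I : Ideal (MvPolynomial σ K)) : ℕ :=
  sSup {k | sqfreePower K I k ≠ ⊥}

/-- The initial degree of a squarefree monomial ideal: the least degree of a
(squarefree) monomial belonging to it. -/
noncomputable def indeg (K : Type) [Field K] {σ : Type}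
    (I : Ideal (MvPolynomial σ K)) : ℕ :=
  sInf {d | ∃ F : Finset σ, F.card = d ∧ sqMon K F ∈ I}

/-- The depth of `S/I` over the polynomial ring `S`: the longest length of a
regular sequence on `S/I` consisting of elements of the irrelevant maximal ideal. -/
noncomputable def polyDepth (K : Type) [Field K] {σ : Type}
    (I : Ideal (MvPolynomial σ K)) : ℕ :=
  sSup {k | ∃ rs : List (MvPolynomial σ K), rs.length = k ∧
    (∀ r ∈ rs, r ∈ Ideal.span (Set.range (X : σ → MvPolynomial σ K))) ∧
    RingTheory.Sequence.IsRegular (MvPolynomial σ K ⧸ I) rs}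

/-- The normalized depth function `g_I(k) = depth(S/I^[k]) - (indeg(I^[k]) - 1)`. -/
noncomputable def nDepth (K : Type) [Field K] {σ : Type}
    (I : Ideal (MvPolynomial σ K)) (k : ℕ) : ℤ :=
  (polyDepth K (sqfreePower K I k) : ℤ) - ((indeg K (sqfreePower K I k) : ℤ) - 1)

open MvPolynomial

/-!
The graph is the disjoint union of `s` single edges and a complete graph on `2 (m - s)` vertices.
A squarefree monomial lies in `I(G)^k` exactly when its support contains a `k`-matching of `G`, so
`I(G)^[k]` is the Stanley–Reisner ideal of the complex `Δ` of all vertex sets that contain no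
`k`-matching, and its initial degree is `2 k`. A set containing `e` of the edges and `c` vertices
of the complete graph is a face of `Δ` exactly when `2 e + c < 2 k`. Complexes defined by such a
bound on the total weight of the disjoint blocks contained in a face are vertex decomposable: any
vertex of a heaviest block can be shed.

For vertex decomposable `Δ` the depth of `S / I_Δ` is the least cardinality `d` of a facet. It is
at most that of any facet `F`, since the annihilator of `x_F` in `S / I_Δ` is the ideal generated by
the variables outside `F`; and the elementary symmetric polynomials `e_1, …, e_d` form a regular
sequence by induction over the vertex decomposition. A facet of the complex above meets every edge,
so it has `s + e + c` elements, and maximality leaves at least `2 k` of them if `k ≤ s`, while for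
`k > s` the facets containing all `s` edges have `2 k - 1` elements.
-/

section RegularSequences

open RingTheory.Sequence
open scoped Pointwise

section ShortExact

variable {R M₁ M₂ M₃ : Type*} [CommRing R] [AddCommGroup M₁] [Module R M₁] [AddCommGroup M₂]
  [Module R M₂] [AddCommGroup M₃] [Module R M₃]

lemma isWeaklyRegular_of_shortExact {f : M₁ →ₗ[R] M₂} {g : M₂ →ₗ[R] M₃}
    (hf : Function.Injective f) (hfg : Function.Exact f g) (hg : Function.Surjective g)
    {rs : List R} (h₁ : IsWeaklyRegular M₁ rs) (h₃ : IsWeaklyRegular M₃ rs) :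
    IsWeaklyRegular M₂ rs := by
  induction rs generalizing M₁ M₂ M₃ with
  | nil => exact .nil R M₂
  | cons r rs ih =>
    rw [isWeaklyRegular_cons_iff] at h₁ h₃ ⊢
    have zero_exact : Function.Exact (0 : M₁ →ₗ[R] M₁) f := fun x => by
      rw [map_eq_zero_iff f hf]
      exact ⟨fun h => ⟨0, h.symm⟩, fun ⟨_, h⟩ => h.symm⟩
    have map_injective : Function.Injective (QuotSMulTop.map r f) := by
      have := QuotSMulTop.map_first_exact_on_four_term_exact_of_isSMulRegular_last
        zero_exact hfg h₃.1
      rw [injective_iff_map_eq_zero]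
      intro x hx
      obtain ⟨y, rfl⟩ := (this x).mp hx
      obtain ⟨y, rfl⟩ := Submodule.mkQ_surjective _ y
      exact map_zero (Submodule.mkQ _)
    exact ⟨isSMulRegular_of_range_eq_ker hf hfg.linearMap_ker_eq.symm h₁.1 h₃.1,
      ih map_injective (QuotSMulTop.map_exact r hfg hg) (QuotSMulTop.map_surjective r hg)
        h₁.2 h₃.2⟩

end ShortExact

section Quotient

variable {R : Type*} [CommRing R] {I : Ideal R}

lemma isWeaklyRegular_quotient_of_colon {f : R} {rs : List R}
    (h_colon : IsWeaklyRegular (R ⧸ I.colon {f}) rs)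
    (h_sup : IsWeaklyRegular (R ⧸ I ⊔ Ideal.span {f}) rs) : IsWeaklyRegular (R ⧸ I) rs := by
  have mem_colon (a : R) : a ∈ I.colon {f} ↔ f * a ∈ I := by
    rw [Submodule.mem_colon_singleton, smul_eq_mul, mul_comm]
  let mulLeft : (R ⧸ I.colon {f}) →ₗ[R] R ⧸ I :=
    Submodule.mapQ _ _ (LinearMap.mulLeft R f) fun a ha => (mem_colon a).mp ha
  let factor : (R ⧸ I) →ₗ[R] R ⧸ I ⊔ Ideal.span {f} := Submodule.factor le_sup_left
  refine isWeaklyRegular_of_shortExact (f := mulLeft) (g := factor) ?_ ?_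
    (Submodule.factor_surjective le_sup_left) h_colon h_sup
  · rw [← LinearMap.ker_eq_bot]
    refine Submodule.ker_liftQ_eq_bot _ _ _ fun a ha => (mem_colon a).mpr ?_
    exact Ideal.Quotient.eq_zero_iff_mem.mp ha
  · refine (Submodule.mkQ_surjective _).forall.mpr fun a => ?_
    rw [Submodule.factor_mk, Submodule.mkQ_apply, Submodule.Quotient.mk_eq_zero]
    constructor
    · intro ha
      obtain ⟨i, hi, y, hy, rfl⟩ := Submodule.mem_sup.mp ha
      obtain ⟨c, rfl⟩ := Ideal.mem_span_singleton.mp hy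
      exact ⟨Submodule.Quotient.mk c, (Submodule.Quotient.eq I).mpr (by simpa using hi)⟩
    · rintro ⟨y, hy⟩
      obtain ⟨c, rfl⟩ := Submodule.mkQ_surjective _ y
      have : f * c - a ∈ I := (Submodule.Quotient.eq I).mp hy
      have ha : a = f * c - (f * c - a) := by ring
      rw [ha]
      exact Submodule.sub_mem _ (Ideal.mem_sup_right (Ideal.mem_span_singleton.mpr ⟨c, rfl⟩))
        (Ideal.mem_sup_left this)

/-- The third isomorphism theorem, in the form needed for regular sequences modulo `I`. -/
noncomputable def quotientQuotientSMulTopEquiv (I J : Ideal R) :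
    ((R ⧸ I) ⧸ (J • ⊤ : Submodule R (R ⧸ I))) ≃ₗ[R] R ⧸ I ⊔ J :=
  Submodule.quotEquivOfEq _ (Submodule.map I.mkQ J) (by
      rw [← Submodule.range_mkQ, ← Submodule.map_top, ← Submodule.map_smul'', smul_eq_mul,
        Ideal.mul_top]) ≪≫ₗ
    Submodule.quotientQuotientEquivQuotientSup I J

lemma isWeaklyRegular_quotient_append_iff {rs ss : List R} :
    IsWeaklyRegular (R ⧸ I) (rs ++ ss) ↔
      IsWeaklyRegular (R ⧸ I) rs ∧ IsWeaklyRegular (R ⧸ I ⊔ Ideal.ofList rs) ss := by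
  rw [isWeaklyRegular_append_iff,
    (quotientQuotientSMulTopEquiv I (Ideal.ofList rs)).isWeaklyRegular_congr]

lemma isWeaklyRegular_quotient_cons_iff {r : R} {rs : List R} :
    IsWeaklyRegular (R ⧸ I) (r :: rs) ↔
      (∀ f, r * f ∈ I → f ∈ I) ∧ IsWeaklyRegular (R ⧸ I ⊔ Ideal.span {r}) rs := by
  rw [← List.singleton_append, isWeaklyRegular_quotient_append_iff, isWeaklyRegular_singleton_iff,
    isSMulRegular_quotient_iff_mem_of_smul_mem, Ideal.ofList_singleton]
  rfl

lemma isWeaklyRegular_quotient_top (rs : List R) : IsWeaklyRegular (R ⧸ (⊤ : Ideal R)) rs := by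
  induction rs with
  | nil => exact .nil _ _
  | cons r rs ih =>
    rw [isWeaklyRegular_quotient_cons_iff, top_sup_eq]
    exact ⟨fun _ _ => trivial, ih⟩

lemma isRegular_quotient_iff {rs : List R} : IsRegular (R ⧸ I) rs ↔
    IsWeaklyRegular (R ⧸ I) rs ∧ I ⊔ Ideal.ofList rs ≠ ⊤ := by
  rw [isRegular_iff, ne_comm, ← Submodule.Quotient.nontrivial_iff,
    (quotientQuotientSMulTopEquiv I (Ideal.ofList rs)).toEquiv.nontrivial_congr,
    Submodule.Quotient.nontrivial_iff]

end Quotient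

section Graded

variable {R S : Type*} [CommRing R] [SetLike S R] [AddSubgroupClass S R] {𝒜 : ℕ → S}
  [GradedRing 𝒜] {I : Ideal R}

lemma isHomogeneous_ofList {rs : List R} (hrs : ∀ r ∈ rs, ∃ i, 0 < i ∧ r ∈ 𝒜 i) :
    (Ideal.ofList rs).IsHomogeneous 𝒜 :=
  Ideal.homogeneous_span 𝒜 _ fun r hr => (hrs r hr).imp fun _ h => h.2

lemma mem_of_forall_mem_sup_span_pow (hI : I.IsHomogeneous 𝒜) {a f : R} {i : ℕ} (hi : 0 < i)
    (ha : a ∈ 𝒜 i) (hf : ∀ n : ℕ, f ∈ I ⊔ Ideal.span {a ^ n}) : f ∈ I := by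
  refine hI.mem_iff.mpr fun d => ?_
  obtain ⟨j, hj, y, hy, rfl⟩ := Submodule.mem_sup.mp (hf (d + 1))
  obtain ⟨c, rfl⟩ := Ideal.mem_span_singleton'.mp hy
  have high_degree : ¬ (d + 1) • i ≤ d := by
    rw [smul_eq_mul]
    nlinarith
  rw [DirectSum.decompose_add, DirectSum.add_apply, AddMemClass.coe_add,
    DirectSum.coe_decompose_mul_of_right_mem_of_not_le 𝒜 (SetLike.pow_mem_graded (d + 1) ha)
      high_degree, add_zero]
  exact hI d hj

lemma eq_bot_of_eq_smul {M : Type*} [AddCommGroup M] [Module R M] (hI : I.IsHomogeneous 𝒜)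
    (e : M ≃ₗ[R] R ⧸ I) {a : R} {i : ℕ} (hi : 0 < i) (ha : a ∈ 𝒜 i) {N : Submodule R M}
    (hN : N = a • N) : N = ⊥ := by
  have eq_pow_smul (n : ℕ) : N = a ^ n • N := by
    induction n with
    | zero => rw [pow_zero, one_smul]
    | succ n ih => rw [pow_succ, mul_smul, ← hN, ← ih]
  rw [eq_bot_iff]
  intro x hx
  obtain ⟨f, hf⟩ := Submodule.mkQ_surjective I (e x)
  have : f ∈ I := mem_of_forall_mem_sup_span_pow hI hi ha fun n => by
    rw [eq_pow_smul n] at hx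
    obtain ⟨y, -, rfl⟩ := hx
    obtain ⟨g, hg⟩ := Submodule.mkQ_surjective I (e y)
    have sub_mem : f - a ^ n * g ∈ I := (Submodule.Quotient.eq I).mp <| by
      rw [← Submodule.mkQ_apply, ← Submodule.mkQ_apply, ← smul_eq_mul, map_smul, hf, hg, ← map_smul]
      rfl
    rw [← sub_add_cancel f (a ^ n * g)]
    exact Submodule.add_mem_sup sub_mem (Ideal.mem_span_singleton.mpr ⟨g, rfl⟩)
  rw [Submodule.mem_bot, ← e.map_eq_zero_iff, ← hf]
  exact (Submodule.Quotient.mk_eq_zero I).mpr this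

lemma isWeaklyRegular_quotient_of_perm (hI : I.IsHomogeneous 𝒜) {rs rs' : List R}
    (hrs : ∀ r ∈ rs, ∃ i, 0 < i ∧ r ∈ 𝒜 i) (h : IsWeaklyRegular (R ⧸ I) rs)
    (hperm : rs.Perm rs') : IsWeaklyRegular (R ⧸ I) rs' := by
  refine h.prototype_perm hperm fun a b ts hts => ?_
  have htrs : ∀ r ∈ a :: b :: ts, ∃ i, 0 < i ∧ r ∈ 𝒜 i := fun r hr => hrs r (hts.subset hr)
  obtain ⟨i, hi, ha⟩ := htrs a List.mem_cons_self
  exact eq_bot_of_eq_smul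
    (hI.sup (isHomogeneous_ofList fun r hr => htrs r (by simp [hr])))
    (quotientQuotientSMulTopEquiv I (Ideal.ofList ts)) hi ha

end Graded

section DepthBound

variable {R M : Type*} [CommRing R] [AddCommGroup M] [Module R M] [IsNoetherian R M]
  {𝔪 : Ideal R} [h𝔪 : 𝔪.IsMaximal] {r : R} {z : M}

lemma not_torsionBySet_torsionOf_le_smul (hz : Ideal.torsionOf R M z ≤ 𝔪) :
    ¬ Submodule.torsionBySet R M (Ideal.torsionOf R M z) ≤
      𝔪 • Submodule.torsionBySet R M (Ideal.torsionOf R M z) := by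
  intro hle
  obtain ⟨t, ht, htN⟩ := Submodule.exists_sub_one_mem_and_smul_eq_zero_of_fg_of_le_smul 𝔪 _
    (IsNoetherian.noetherian _) hle
  have htz : t • z = 0 := htN z <| (Submodule.mem_torsionBySet_iff _ _).mpr fun a => a.2
  refine h𝔪.ne_top ((Ideal.eq_top_iff_one 𝔪).mpr ?_)
  simpa using 𝔪.sub_mem (hz htz) ht

lemma exists_torsionOf_quotSMulTop_le (hz : Ideal.torsionOf R M z ≤ 𝔪) (hr : r ∈ 𝔪)
    (hreg : IsSMulRegular M r) :
    ∃ y : QuotSMulTop r M, Ideal.torsionOf R _ y ≤ 𝔪 ∧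
      Ideal.torsionOf R M z ⊔ Ideal.span {r} ≤ Ideal.torsionOf R _ y := by
  set N := Submodule.torsionBySet R M (Ideal.torsionOf R M z) with hN
  have mem_N (x : M) : x ∈ N ↔ ∀ a ∈ Ideal.torsionOf R M z, a • x = 0 := by
    rw [hN, Submodule.mem_torsionBySet_iff]
    exact Subtype.forall
  by_contra! hcon
  refine not_torsionBySet_torsionOf_le_smul hz fun x hx => ?_
  obtain ⟨u, hu, hum⟩ : ∃ u, u • x ∈ r • (⊤ : Submodule R M) ∧ u ∉ 𝔪 := by
    by_contra! h
    have mem_torsionOf (a : R) : a ∈ Ideal.torsionOf R _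
        (Submodule.mkQ (r • (⊤ : Submodule R M)) x) ↔ a • x ∈ r • (⊤ : Submodule R M) := by
      rw [Ideal.mem_torsionOf_iff, ← map_smul, Submodule.mkQ_apply, Submodule.Quotient.mk_eq_zero]
    refine hcon (Submodule.mkQ (r • (⊤ : Submodule R M)) x)
      (fun a ha => h a ((mem_torsionOf a).mp ha)) (sup_le ?_ ?_)
    · exact fun a ha => (mem_torsionOf a).mpr (by rw [(mem_N x).mp hx a ha]; exact zero_mem _)
    · rw [Ideal.span_singleton_le_iff_mem, mem_torsionOf]
      exact Submodule.smul_mem_pointwise_smul x r ⊤ trivial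
  obtain ⟨c, -, hc : r • c = u • x⟩ := hu
  have hcN : c ∈ N := (mem_N c).mpr fun a ha => hreg.right_eq_zero_of_smul <| by
    rw [smul_comm, hc, smul_comm, (mem_N x).mp hx a ha, smul_zero]
  obtain ⟨v, w, hw, hvw⟩ := h𝔪.exists_inv hum
  have hx_eq : x = (v * r) • c + w • x := by
    rw [mul_smul, hc, ← mul_smul, ← add_smul, hvw, one_smul]
  rw [hx_eq]
  exact add_mem (Submodule.smul_mem_smul (𝔪.mul_mem_left v hr) hcN)
    (Submodule.smul_mem_smul hw hx)

lemma length_le_ringKrullDim {rs : List R} (h : IsWeaklyRegular M rs) (hrs : ∀ r ∈ rs, r ∈ 𝔪)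
    (hz : Ideal.torsionOf R M z ≤ 𝔪) :
    (rs.length : WithBot ℕ∞) ≤ ringKrullDim (R ⧸ Ideal.torsionOf R M z) := by
  induction rs generalizing M with
  | nil =>
    have : Nontrivial (R ⧸ Ideal.torsionOf R M z) :=
      Ideal.Quotient.nontrivial_iff.mpr (ne_top_of_le_ne_top h𝔪.ne_top hz)
    simpa using ringKrullDim_nonneg_of_nontrivial
  | cons r rs ih =>
    rw [isWeaklyRegular_cons_iff] at h
    obtain ⟨y, hy, hle⟩ := exists_torsionOf_quotSMulTop_le hz (hrs r List.mem_cons_self) h.1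
    have nonZeroDivisor : Ideal.Quotient.mk (Ideal.torsionOf R M z) r ∈
        nonZeroDivisors (R ⧸ Ideal.torsionOf R M z) := by
      refine mem_nonZeroDivisors_iff_left.mpr <|
        Ideal.Quotient.mk_surjective.forall.mpr fun a ha => ?_
      rw [← map_mul, Ideal.Quotient.eq_zero_iff_mem, Ideal.mem_torsionOf_iff, mul_smul] at ha
      exact Ideal.Quotient.eq_zero_iff_mem.mpr (h.1.right_eq_zero_of_smul ha)
    calc ((r :: rs).length : WithBot ℕ∞) = rs.length + 1 := by simp
      _ ≤ ringKrullDim (R ⧸ Ideal.torsionOf R _ y) + 1 := by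
        gcongr
        exact ih h.2 (fun s hs => hrs s (List.mem_cons_of_mem r hs)) hy
      _ ≤ ringKrullDim (R ⧸ Ideal.torsionOf R M z) :=
        ringKrullDim_succ_le_of_surjective (Ideal.Quotient.factor (le_sup_left.trans hle))
          (Ideal.Quotient.factor_surjective _) nonZeroDivisor
          (Ideal.Quotient.eq_zero_iff_mem.mpr
            (hle (Ideal.mem_sup_right (Ideal.mem_span_singleton_self r))))

lemma torsionOf_quotient_mk (I : Ideal R) (f : R) :
    Ideal.torsionOf R (R ⧸ I) (Ideal.Quotient.mk I f) = I.colon {f} := by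
  ext a
  rw [Ideal.mem_torsionOf_iff, Submodule.mem_colon_singleton]
  exact Ideal.Quotient.eq_zero_iff_mem

end DepthBound

end RegularSequences

section StanleyReisner

variable {σ : Type} {Δ : LowerSet (Finset σ)} {v : σ} {F : Finset σ}

/-- The Stanley–Reisner ideal of the simplicial complex `Δ`: the ideal generated by the squarefree
monomials of the non-faces of `Δ`, described as the set of all polynomials every monomial of which
has a non-face as its support. Simplicial complexes are lower sets of finite sets; they may be
void, and the elements of `σ` need not be vertices. -/
noncomputable def stanleyReisnerIdeal (K : Type) [Field K] (Δ : LowerSet (Finset σ)) :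
    Ideal (MvPolynomial σ K) :=
  restrictSupportIdeal K {α | α.support ∉ Δ}
    fun _ _ h hα hβ => hα (Δ.lower (Finsupp.support_mono h) hβ)

/-- The deletion of `v` from the simplicial complex `Δ`, consisting of the faces avoiding `v`. -/
def deletion (Δ : LowerSet (Finset σ)) (v : σ) : LowerSet (Finset σ) where
  carrier := {F | F ∈ Δ ∧ v ∉ F}
  lower' _ _ h hF := ⟨Δ.lower h hF.1, fun hv => hF.2 (h hv)⟩

lemma mem_deletion : F ∈ deletion Δ v ↔ F ∈ Δ ∧ v ∉ F := Iff.rfl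

variable {K : Type} [Field K]

lemma mem_stanleyReisnerIdeal {f : MvPolynomial σ K} :
    f ∈ stanleyReisnerIdeal K Δ ↔ ∀ α ∈ f.support, α.support ∉ Δ := Iff.rfl

lemma stanleyReisnerIdeal_bot : stanleyReisnerIdeal K (⊥ : LowerSet (Finset σ)) = ⊤ :=
  (Ideal.eq_top_iff_one _).mpr fun _ _ => LowerSet.notMem_bot

lemma stanleyReisnerIdeal_le_idealOfVars (h : ∅ ∈ Δ) :
    stanleyReisnerIdeal K Δ ≤ idealOfVars σ K := by
  intro f hf
  rw [← pow_one (idealOfVars σ K), mem_pow_idealOfVars_iff]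
  refine fun α hα => Nat.one_le_iff_ne_zero.mpr fun h0 => hf hα ?_
  rw [(Finsupp.degree_eq_zero_iff α).mp h0]
  simpa using h

section Homogeneous

attribute [local instance] MvPolynomial.gradedAlgebra

lemma stanleyReisnerIdeal_isHomogeneous (Δ : LowerSet (Finset σ)) :
    (stanleyReisnerIdeal K Δ).IsHomogeneous (homogeneousSubmodule σ K) := by
  intro n f hf
  have component : (DirectSum.decompose (homogeneousSubmodule σ K) f n : MvPolynomial σ K) =
      homogeneousComponent n f := decomposition.decompose'_apply f n
  rw [component]
  refine mem_stanleyReisnerIdeal.mpr fun α hα => mem_stanleyReisnerIdeal.mp hf α ?_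
  rw [mem_support_iff, coeff_homogeneousComponent] at hα
  exact mem_support_iff.mpr fun h0 => hα (by rw [h0, ite_self])

end Homogeneous

lemma sqMon_support_dvd_monomial (α : σ →₀ ℕ) (c : K) : sqMon K α.support ∣ monomial α c := by
  rw [monomial_eq, Finsupp.prod]
  exact dvd_mul_of_dvd_right (Finset.prod_dvd_prod_of_dvd _ _ fun i hi =>
    dvd_pow_self _ (Finsupp.mem_support_iff.mp hi)) _

section ClosedStar

variable [DecidableEq σ]

/-- The closed star of `v` in the simplicial complex `Δ`. -/
def closedStar (Δ : LowerSet (Finset σ)) (v : σ) : LowerSet (Finset σ) where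
  carrier := {F | insert v F ∈ Δ}
  lower' _ _ h hF := Δ.lower (Finset.insert_subset_insert v h) hF

lemma mem_closedStar : F ∈ closedStar Δ v ↔ insert v F ∈ Δ := Iff.rfl

lemma closedStar_Iic (hv : v ∈ F) : closedStar (LowerSet.Iic F) v = LowerSet.Iic F := by
  ext t
  exact ⟨(Finset.subset_insert v t).trans, Finset.insert_subset hv⟩

lemma deletion_Iic (F : Finset σ) (v : σ) :
    deletion (LowerSet.Iic F) v = LowerSet.Iic (F.erase v) := by
  ext t
  exact Finset.subset_erase.symm

lemma X_mul_mem_stanleyReisnerIdeal {f : MvPolynomial σ K} :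
    X v * f ∈ stanleyReisnerIdeal K Δ ↔ f ∈ stanleyReisnerIdeal K (closedStar Δ v) := by
  have support_single_add (α : σ →₀ ℕ) :
      (Finsupp.single v 1 + α).support = insert v α.support := by
    rw [Finsupp.support_add_eq_union, Finsupp.support_single v one_ne_zero,
      Finset.singleton_union]
  simp only [mem_stanleyReisnerIdeal, mem_closedStar, support_X_mul, Finset.mem_map,
    addLeftEmbedding_apply, forall_exists_index, and_imp, forall_apply_eq_imp_iff₂,
    support_single_add]

lemma stanleyReisnerIdeal_colon_X :
    (stanleyReisnerIdeal K Δ).colon {X v} = stanleyReisnerIdeal K (closedStar Δ v) := by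
  ext f
  rw [Submodule.mem_colon_singleton, smul_eq_mul, mul_comm, X_mul_mem_stanleyReisnerIdeal]

lemma sqMon_mul_mem_stanleyReisnerIdeal {f : MvPolynomial σ K} :
    sqMon K F * f ∈ stanleyReisnerIdeal K Δ ↔ ∀ α ∈ f.support, F ∪ α.support ∉ Δ := by
  induction F using Finset.induction_on generalizing Δ with
  | empty => simp [sqMon, mem_stanleyReisnerIdeal]
  | insert v F hv ih =>
    have : sqMon K (insert v F) = X v * sqMon K F := Finset.prod_insert hv
    simp only [this, mul_assoc, X_mul_mem_stanleyReisnerIdeal, ih, mem_closedStar,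
      Finset.insert_union]

end ClosedStar

lemma sqMon_mem_stanleyReisnerIdeal : sqMon K F ∈ stanleyReisnerIdeal K Δ ↔ F ∉ Δ := by
  classical
  have support_one : (1 : MvPolynomial σ K).support = {0} := by
    ext α
    simp
  rw [← mul_one (sqMon K F), sqMon_mul_mem_stanleyReisnerIdeal, support_one]
  simp only [Finset.mem_singleton, forall_eq, Finsupp.support_zero, Finset.union_empty]

lemma span_sqMon_notMem (Δ : LowerSet (Finset σ)) :
    Ideal.span {p | ∃ F, p = sqMon K F ∧ F ∉ Δ} = stanleyReisnerIdeal K Δ := by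
  refine le_antisymm (Ideal.span_le.mpr ?_) fun f hf => ?_
  · rintro _ ⟨F, rfl, hF⟩
    exact sqMon_mem_stanleyReisnerIdeal.mpr hF
  · rw [f.as_sum]
    exact Ideal.sum_mem _ fun α hα => Ideal.mem_of_dvd _ (sqMon_support_dvd_monomial α _)
      (Ideal.subset_span ⟨_, rfl, mem_stanleyReisnerIdeal.mp hf α hα⟩)

lemma stanleyReisnerIdeal_sup_span_X :
    stanleyReisnerIdeal K Δ ⊔ Ideal.span {X v} = stanleyReisnerIdeal K (deletion Δ v) := by
  have X_eq : (X v : MvPolynomial σ K) = sqMon K {v} := by simp [sqMon]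
  refine le_antisymm (sup_le (fun f hf α hα hα' => hf hα hα'.1) ?_) ?_
  · rw [Ideal.span_singleton_le_iff_mem, X_eq, sqMon_mem_stanleyReisnerIdeal, mem_deletion]
    simp
  · rw [← span_sqMon_notMem (deletion Δ v), Ideal.span_le]
    rintro _ ⟨F, rfl, hF⟩
    by_cases hv : v ∈ F
    · exact Ideal.mem_sup_right (Ideal.mem_span_singleton.mpr (Finset.dvd_prod_of_mem _ hv))
    · exact Ideal.mem_sup_left (sqMon_mem_stanleyReisnerIdeal.mpr fun h => hF ⟨h, hv⟩)

lemma stanleyReisnerIdeal_colon_sqMon_facet (hF : Maximal (· ∈ Δ) F) :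
    (stanleyReisnerIdeal K Δ).colon {sqMon K F} = stanleyReisnerIdeal K (LowerSet.Iic F) := by
  classical
  ext f
  rw [Submodule.mem_colon_singleton, smul_eq_mul, mul_comm, sqMon_mul_mem_stanleyReisnerIdeal,
    mem_stanleyReisnerIdeal]
  refine forall₂_congr fun α _ => not_congr ⟨fun h => ?_, fun h => ?_⟩
  · exact Finset.subset_union_right.trans (hF.le_of_ge h Finset.subset_union_left)
  · rw [Finset.union_eq_left.mpr (LowerSet.mem_Iic_iff.mp h)]
    exact hF.prop

end StanleyReisner

section ElementarySymmetric

open RingTheory.Sequence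

attribute [local instance] MvPolynomial.gradedAlgebra

variable {K : Type} [Field K] {σ : Type}

lemma mem_of_sqMon_mul_mem {J : Ideal (MvPolynomial σ K)} {F : Finset σ}
    (hX : ∀ v ∈ F, ∀ f, X v * f ∈ J → f ∈ J) {f : MvPolynomial σ K} (hf : sqMon K F * f ∈ J) :
    f ∈ J := by
  classical
  induction F using Finset.induction_on generalizing f with
  | empty => simpa [sqMon] using hf
  | insert v F hv ih =>
    rw [sqMon, Finset.prod_insert hv, mul_assoc] at hf
    exact ih (fun w hw => hX w (Finset.mem_insert_of_mem hw))
      (hX v (Finset.mem_insert_self v F) _ hf)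

variable [Fintype σ]

variable (K σ) in
/-- The elementary symmetric polynomials of degrees `1, …, d`. -/
noncomputable def esymmList (d : ℕ) : List (MvPolynomial σ K) :=
  (List.range d).map fun i => esymm σ K (i + 1)

lemma length_esymmList (d : ℕ) : (esymmList K σ d).length = d := by
  rw [esymmList, List.length_map, List.length_range]

lemma esymmList_succ (d : ℕ) :
    esymmList K σ (d + 1) = esymmList K σ d ++ [esymm σ K (d + 1)] := by
  rw [esymmList, List.range_succ, List.map_append, List.map_singleton, esymmList]

lemma mem_idealOfVars_of_mem_esymmList {d : ℕ} {r : MvPolynomial σ K}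
    (hr : r ∈ esymmList K σ d) : r ∈ idealOfVars σ K := by
  obtain ⟨i, -, rfl⟩ := List.mem_map.mp hr
  refine Ideal.sum_mem _ fun t ht => ?_
  obtain ⟨v, hv⟩ : t.Nonempty :=
    Finset.card_pos.mp ((Finset.mem_powersetCard.mp ht).2 ▸ i.succ_pos)
  exact Ideal.mem_of_dvd _ (Finset.dvd_prod_of_mem _ hv) (Ideal.subset_span ⟨v, rfl⟩)

lemma isHomogeneous_esymm (n : ℕ) : (esymm σ K n).IsHomogeneous n := by
  refine IsHomogeneous.sum _ _ _ fun t ht => ?_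
  simpa [(Finset.mem_powersetCard.mp ht).2] using
    IsHomogeneous.prod t (fun i => (X i : MvPolynomial σ K)) (fun _ => 1)
      fun i _ => isHomogeneous_X K i

lemma exists_mem_homogeneousSubmodule_of_mem_esymmList {d : ℕ} {r : MvPolynomial σ K}
    (hr : r ∈ esymmList K σ d) : ∃ i, 0 < i ∧ r ∈ homogeneousSubmodule σ K i := by
  obtain ⟨i, -, rfl⟩ := List.mem_map.mp hr
  exact ⟨i + 1, i.succ_pos, isHomogeneous_esymm (i + 1)⟩

variable {F : Finset σ} {v : σ}

lemma esymm_card_sub_sqMon_mem (F : Finset σ) :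
    esymm σ K F.card - sqMon K F ∈ stanleyReisnerIdeal K (LowerSet.Iic F) := by
  classical
  have hF : F ∈ Finset.powersetCard F.card (Finset.univ : Finset σ) := by simp
  rw [esymm, ← Finset.add_sum_erase _ _ hF, sqMon, add_sub_cancel_left]
  refine Ideal.sum_mem _ fun t ht => ?_
  obtain ⟨hne, ht⟩ := Finset.mem_erase.mp ht
  exact sqMon_mem_stanleyReisnerIdeal.mpr fun hle => hne <|
    Finset.eq_of_subset_of_card_le hle (Finset.mem_powersetCard.mp ht).2.ge

lemma isWeaklyRegular_esymmList_append_X [DecidableEq σ] (hv : v ∈ F) {d : ℕ}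
    (h : IsWeaklyRegular (MvPolynomial σ K ⧸ stanleyReisnerIdeal K (LowerSet.Iic (F.erase v)))
      (esymmList K σ d)) :
    IsWeaklyRegular (MvPolynomial σ K ⧸ stanleyReisnerIdeal K (LowerSet.Iic F))
      (esymmList K σ d ++ [X v]) := by
  refine isWeaklyRegular_quotient_of_perm (stanleyReisnerIdeal_isHomogeneous _) ?_
    (rs := X v :: esymmList K σ d) ?_ (List.perm_append_singleton _ _).symm
  · exact List.forall_mem_cons.mpr ⟨⟨1, one_pos, isHomogeneous_X K v⟩,
      fun r => exists_mem_homogeneousSubmodule_of_mem_esymmList⟩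
  · rw [isWeaklyRegular_quotient_cons_iff, stanleyReisnerIdeal_sup_span_X, deletion_Iic]
    refine ⟨fun f hf => ?_, h⟩
    rwa [X_mul_mem_stanleyReisnerIdeal, closedStar_Iic hv] at hf

-- Modulo the lower ones, the top elementary symmetric polynomial acts as the product of the
-- variables in `F`, each of which is regular because it may be moved to the front.
lemma isWeaklyRegular_esymmList_Iic {d : ℕ} (hd : d ≤ F.card) :
    IsWeaklyRegular (MvPolynomial σ K ⧸ stanleyReisnerIdeal K (LowerSet.Iic F))
      (esymmList K σ d) := by
  classical
  induction hn : F.card generalizing F d with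
  | zero =>
    obtain rfl : d = 0 := by omega
    exact .nil _ _
  | succ n ih =>
    have append_X {e : ℕ} (he : e ≤ n) {v : σ} (hv : v ∈ F) :=
      isWeaklyRegular_esymmList_append_X (K := K) hv (ih (F := F.erase v) (d := e)
        (by rw [Finset.card_erase_of_mem hv]; omega) (by rw [Finset.card_erase_of_mem hv]; omega))
    obtain ⟨v, hv⟩ : F.Nonempty := Finset.card_pos.mp (by omega)
    obtain hdn | rfl : d ≤ n ∨ d = n + 1 := by omega
    · exact (isWeaklyRegular_quotient_append_iff.mp (append_X hdn hv)).1
    · have regular_X := fun w hw => (isWeaklyRegular_quotient_cons_iff.mp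
        (isWeaklyRegular_quotient_append_iff.mp (append_X le_rfl (v := w) hw)).2).1
      rw [esymmList_succ, isWeaklyRegular_quotient_append_iff, isWeaklyRegular_quotient_cons_iff]
      refine ⟨(isWeaklyRegular_quotient_append_iff.mp (append_X le_rfl hv)).1, fun f hf => ?_,
        .nil _ _⟩
      refine mem_of_sqMon_mul_mem regular_X ?_
      have sqMon_mul : sqMon K F * f =
          esymm σ K (n + 1) * f - (esymm σ K F.card - sqMon K F) * f := by
        rw [hn]
        ring
      rw [sqMon_mul]
      exact Ideal.sub_mem _ hf
        (Ideal.mem_sup_left (Ideal.mul_mem_right _ _ (esymm_card_sub_sqMon_mem F)))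

end ElementarySymmetric

section VertexDecomposable

open RingTheory.Sequence

variable {σ : Type} [DecidableEq σ]

/-- Nonpure vertex decomposability of simplicial complexes. Closed stars replace the customary
links, which are vertex decomposable if and only if the closed stars, being cones over them, are. -/
inductive VertexDecomposable : LowerSet (Finset σ) → Prop
  | void : VertexDecomposable ⊥
  | simplex (F : Finset σ) : VertexDecomposable (LowerSet.Iic F)
  | shed {Δ : LowerSet (Finset σ)} (v : σ)
      (maximal_of_deletion : ∀ F, Maximal (· ∈ deletion Δ v) F → Maximal (· ∈ Δ) F)
      (closedStar : VertexDecomposable (closedStar Δ v))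
      (deletion : VertexDecomposable (deletion Δ v)) : VertexDecomposable Δ

variable {Δ : LowerSet (Finset σ)}

lemma maximal_of_maximal_closedStar {v : σ} {F : Finset σ}
    (hF : Maximal (· ∈ closedStar Δ v) F) : Maximal (· ∈ Δ) F := by
  have insert_mem : insert v F ∈ closedStar Δ v := by
    rw [mem_closedStar, Finset.insert_idem]
    exact hF.prop
  have hv : v ∈ F := hF.le_of_ge insert_mem (Finset.subset_insert v F)
    (Finset.mem_insert_self v F)
  have mem_iff (G : Finset σ) (h : v ∈ G) : G ∈ closedStar Δ v ↔ G ∈ Δ := by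
    rw [mem_closedStar, Finset.insert_eq_of_mem h]
  exact ⟨(mem_iff F hv).mp hF.prop, fun G hG hFG => hF.le_of_ge ((mem_iff G (hFG hv)).mpr hG) hFG⟩

/-- Every vertex decomposable complex is sequentially Cohen–Macaulay; this is the resulting lower
bound for the depth of its Stanley–Reisner ring, with an explicit regular sequence. -/
theorem VertexDecomposable.isWeaklyRegular_esymmList [Fintype σ] {K : Type} [Field K]
    (hΔ : VertexDecomposable Δ) {d : ℕ} (hd : ∀ F, Maximal (· ∈ Δ) F → d ≤ F.card) :
    IsWeaklyRegular (MvPolynomial σ K ⧸ stanleyReisnerIdeal K Δ) (esymmList K σ d) := by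
  induction hΔ with
  | void =>
    rw [stanleyReisnerIdeal_bot]
    exact isWeaklyRegular_quotient_top _
  | simplex F =>
    exact isWeaklyRegular_esymmList_Iic (hd F ⟨LowerSet.mem_Iic_iff.mpr le_rfl, fun _ hG _ => hG⟩)
  | shed v maximal_of_deletion _ _ ih_closedStar ih_deletion =>
    refine isWeaklyRegular_quotient_of_colon (f := X v) ?_ ?_
    · rw [stanleyReisnerIdeal_colon_X]
      exact ih_closedStar fun F hF => hd F (maximal_of_maximal_closedStar hF)
    · rw [stanleyReisnerIdeal_sup_span_X]
      exact ih_deletion fun F hF => hd F (maximal_of_deletion F hF)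

end VertexDecomposable

section Depth

open RingTheory.Sequence

variable {K : Type} [Field K] {σ : Type}

instance isMaximal_idealOfVars : (idealOfVars σ K).IsMaximal := by
  have eq_ker : idealOfVars σ K = RingHom.ker (constantCoeff (σ := σ) (R := K)) := by
    ext f
    rw [← pow_one (idealOfVars σ K), mem_pow_idealOfVars_iff', RingHom.mem_ker,
      constantCoeff_eq]
    exact ⟨fun h => h 0 (by simp), fun h α hα => by
      rwa [(Finsupp.degree_eq_zero_iff α).mp (Nat.lt_one_iff.mp hα)]⟩
  rw [eq_ker]
  exact RingHom.ker_isMaximal_of_surjective _ fun c => ⟨C c, constantCoeff_C σ c⟩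

variable {Δ : LowerSet (Finset σ)} {F : Finset σ}

lemma ringKrullDim_quotient_Iic_le (F : Finset σ) :
    ringKrullDim (MvPolynomial σ K ⧸ stanleyReisnerIdeal K (LowerSet.Iic F)) ≤ F.card := by
  classical
  set mk := Ideal.Quotient.mk (stanleyReisnerIdeal K (LowerSet.Iic F)) with mk_def
  have surjective : Function.Surjective (mk.comp (rename ((↑) : F → σ)).toRingHom) := by
    rw [← RingHom.range_eq_top, eq_top_iff]
    rintro x -
    obtain ⟨p, rfl⟩ := Ideal.Quotient.mk_surjective x
    induction p using MvPolynomial.induction_on with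
    | C a => exact ⟨C a, by simp [mk_def]⟩
    | add p q hp hq =>
      rw [map_add]
      exact add_mem hp hq
    | mul_X p v hp =>
      rw [map_mul]
      refine mul_mem hp ?_
      by_cases hv : v ∈ F
      · exact ⟨X ⟨v, hv⟩, by simp [mk_def]⟩
      · have X_mem : (X v : MvPolynomial σ K) ∈ stanleyReisnerIdeal K (LowerSet.Iic F) := by
          rw [← mul_one (X v), X_mul_mem_stanleyReisnerIdeal]
          exact fun _ _ hle => hv (hle (Finset.mem_insert_self v _))
        rw [Ideal.Quotient.eq_zero_iff_mem.mpr X_mem]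
        exact zero_mem _
  calc ringKrullDim (MvPolynomial σ K ⧸ stanleyReisnerIdeal K (LowerSet.Iic F))
      ≤ ringKrullDim (MvPolynomial F K) := ringKrullDim_le_of_surjective _ surjective
    _ = F.card := by
      rw [MvPolynomial.ringKrullDim_of_isNoetherianRing, ringKrullDim_eq_zero_of_field, zero_add,
        Nat.card_eq_fintype_card, Fintype.card_coe]

variable [Finite σ]

lemma length_le_card_facet (hF : Maximal (· ∈ Δ) F) {rs : List (MvPolynomial σ K)}
    (hrs : ∀ r ∈ rs, r ∈ idealOfVars σ K)
    (h : IsWeaklyRegular (MvPolynomial σ K ⧸ stanleyReisnerIdeal K Δ) rs) :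
    rs.length ≤ F.card := by
  have torsionOf_eq : Ideal.torsionOf (MvPolynomial σ K) _
      (Ideal.Quotient.mk (stanleyReisnerIdeal K Δ) (sqMon K F)) =
      stanleyReisnerIdeal K (LowerSet.Iic F) := by
    rw [torsionOf_quotient_mk, stanleyReisnerIdeal_colon_sqMon_facet hF]
  have length_le := length_le_ringKrullDim h hrs
    (torsionOf_eq.trans_le (stanleyReisnerIdeal_le_idealOfVars (Finset.empty_subset F)))
  rw [torsionOf_eq] at length_le
  exact_mod_cast length_le.trans (ringKrullDim_quotient_Iic_le F)

lemma polyDepth_le_card_facet (hF : Maximal (· ∈ Δ) F) :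
    polyDepth K (stanleyReisnerIdeal K Δ) ≤ F.card := by
  refine csSup_le' ?_
  rintro _ ⟨rs, rfl, hrs, h⟩
  exact length_le_card_facet hF hrs (isRegular_quotient_iff.mp h).1

lemma le_polyDepth_of_vertexDecomposable [DecidableEq σ] (hΔ : VertexDecomposable Δ)
    (h_empty : ∅ ∈ Δ) {d : ℕ} (hd : ∀ F, Maximal (· ∈ Δ) F → d ≤ F.card) :
    d ≤ polyDepth K (stanleyReisnerIdeal K Δ) := by
  have := Fintype.ofFinite σ
  obtain ⟨F, -, hF⟩ := (Set.toFinite (Δ : Set (Finset σ))).exists_le_maximal h_empty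
  refine le_csSup ⟨F.card, ?_⟩ ⟨esymmList K σ d, length_esymmList d,
    fun r => mem_idealOfVars_of_mem_esymmList, isRegular_quotient_iff.mpr
      ⟨hΔ.isWeaklyRegular_esymmList hd, ?_⟩⟩
  · rintro _ ⟨rs, rfl, hrs, h⟩
    exact length_le_card_facet hF hrs (isRegular_quotient_iff.mp h).1
  · refine ne_top_of_le_ne_top (isMaximal_idealOfVars (σ := σ) (K := K)).ne_top (sup_le ?_ ?_)
    · exact stanleyReisnerIdeal_le_idealOfVars h_empty
    · exact Ideal.span_le.mpr fun r => mem_idealOfVars_of_mem_esymmList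

end Depth

section BlockThreshold

open Function

variable {σ ι : Type} [DecidableEq σ] [Fintype ι] {V F : Finset σ} {B : ι → Finset σ}
  {c : ι → ℕ} {q : ℕ} {u v : σ} {i : ι}

/-- The total weight of those blocks `B i` that are contained in `F`, where `B i` weighs `c i`. -/
def blockWeight (B : ι → Finset σ) (c : ι → ℕ) (F : Finset σ) : ℕ :=
  ∑ i with B i ⊆ F, c i

lemma blockWeight_mono {G : Finset σ} (h : F ⊆ G) : blockWeight B c F ≤ blockWeight B c G :=
  Finset.sum_le_sum_of_subset
    (Finset.monotone_filter_right _ fun _ _ hi => hi.trans h)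

/-- The simplicial complex of all subsets of `V` whose block weight stays below `q`. -/
def blockThresholdComplex (V : Finset σ) (B : ι → Finset σ) (c : ι → ℕ) (q : ℕ) :
    LowerSet (Finset σ) where
  carrier := {F | F ⊆ V ∧ blockWeight B c F < q}
  lower' _ _ h hF := ⟨h.trans hF.1, (blockWeight_mono h).trans_lt hF.2⟩

lemma mem_blockThresholdComplex :
    F ∈ blockThresholdComplex V B c q ↔ F ⊆ V ∧ blockWeight B c F < q := Iff.rfl

lemma closedStar_blockThresholdComplex (hv : v ∈ V) :
    closedStar (blockThresholdComplex V B c q) v =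
      blockThresholdComplex V (fun i => (B i).erase v) c q := by
  ext F
  simp only [SetLike.mem_coe, mem_closedStar, mem_blockThresholdComplex, blockWeight,
    Finset.insert_subset_iff, hv, true_and, Finset.subset_insert_iff]

lemma deletion_blockThresholdComplex :
    deletion (blockThresholdComplex V B c q) v = blockThresholdComplex (V.erase v) B c q := by
  ext F
  simp only [SetLike.mem_coe, mem_deletion, mem_blockThresholdComplex, Finset.subset_erase]
  tauto

lemma blockWeight_insert_of_subset (hB : Pairwise (Disjoint on B)) (hui : u ∈ B i) (huF : u ∉ F)
    (hi : B i ⊆ insert u F) : blockWeight B c (insert u F) = c i + blockWeight B c F := by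
  classical
  have hi_notMem : i ∉ ({j | B j ⊆ F} : Finset ι) := by
    rw [Finset.mem_filter_univ]
    exact fun h => huF (h hui)
  rw [blockWeight, blockWeight, ← Finset.sum_insert hi_notMem]
  congr 1
  ext j
  rw [Finset.mem_insert, Finset.mem_filter_univ, Finset.mem_filter_univ]
  obtain rfl | hji := eq_or_ne j i
  · simp [hi]
  · have huj : u ∉ B j := Finset.disjoint_right.mp (hB hji) hui
    simp only [hji, false_or, Finset.subset_insert_iff_of_notMem huj]

lemma blockWeight_insert_of_forall_not_subset (h : ∀ j, u ∈ B j → ¬ B j ⊆ insert u F) :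
    blockWeight B c (insert u F) = blockWeight B c F := by
  refine Finset.sum_congr (Finset.filter_congr fun j _ => ?_) fun _ _ => rfl
  by_cases huj : u ∈ B j
  · exact iff_of_false (h j huj) fun hj => h j huj (hj.trans (Finset.subset_insert u F))
  · exact Finset.subset_insert_iff_of_notMem huj

lemma le_blockWeight_insert_of_maximal (hF : Maximal (· ∈ blockThresholdComplex V B c q) F)
    (huV : u ∈ V) (huF : u ∉ F) : q ≤ blockWeight B c (insert u F) := by
  by_contra! hlt
  exact huF (hF.le_of_ge ⟨Finset.insert_subset huV hF.prop.1, hlt⟩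
    (Finset.subset_insert u F) (Finset.mem_insert_self u F))

lemma subset_insert_of_maximal (hB : Pairwise (Disjoint on B))
    (hF : Maximal (· ∈ blockThresholdComplex V B c q) F) (huV : u ∈ V) (huF : u ∉ F)
    (hui : u ∈ B i) : B i ⊆ insert u F := by
  by_contra hi
  have weight_eq : blockWeight B c (insert u F) = blockWeight B c F :=
    blockWeight_insert_of_forall_not_subset fun j huj => by
      rwa [hB.eq (Finset.not_disjoint_iff.mpr ⟨u, huj, hui⟩)]
  exact hF.prop.2.not_ge (weight_eq ▸ le_blockWeight_insert_of_maximal hF huV huF)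

lemma le_add_blockWeight_of_maximal (hB : Pairwise (Disjoint on B))
    (hF : Maximal (· ∈ blockThresholdComplex V B c q) F) (huV : u ∈ V) (huF : u ∉ F)
    (hui : u ∈ B i) : q ≤ c i + blockWeight B c F := by
  rw [← blockWeight_insert_of_subset hB hui huF (subset_insert_of_maximal hB hF huV huF hui)]
  exact le_blockWeight_insert_of_maximal hF huV huF

-- If a facet `F` of the deletion could be enlarged by `v`, then `B i ⊆ insert v F`, and as `B i` is
-- the heaviest block, `F` could also be enlarged by any other vertex `u`.
lemma maximal_of_maximal_deletion_blockThresholdComplex (hB : Pairwise (Disjoint on B))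
    (hV : V ∉ blockThresholdComplex V B c q) (hvi : v ∈ B i) (hiV : B i ⊆ V)
    (hi : ∀ j, (B j).Nonempty → B j ⊆ V → c j ≤ c i)
    (hF : Maximal (· ∈ deletion (blockThresholdComplex V B c q) v) F) :
    Maximal (· ∈ blockThresholdComplex V B c q) F := by
  obtain ⟨hFΔ, hvF⟩ := hF.prop
  have hF' : Maximal (· ∈ blockThresholdComplex (V.erase v) B c q) F := by
    rwa [deletion_blockThresholdComplex] at hF
  have le_blockWeight_insert_v : q ≤ blockWeight B c (insert v F) := by
    by_contra! hlt
    obtain ⟨u, huV, hu⟩ : ∃ u ∈ V, u ∉ insert v F := by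
      by_contra! hsub
      exact hV ⟨subset_rfl, (blockWeight_mono hsub).trans_lt hlt⟩
    have hi_subset : B i ⊆ insert v F := by
      by_contra hiF
      obtain ⟨w, hwi, hw⟩ := Finset.not_subset.mp hiF
      rw [Finset.mem_insert, not_or] at hw
      have hv := subset_insert_of_maximal hB hF' (Finset.mem_erase.mpr ⟨hw.1, hiV hwi⟩) hw.2 hwi hvi
      exact (Finset.mem_insert.mp hv).elim (Ne.symm hw.1) hvF
    rw [blockWeight_insert_of_subset hB hvi hvF hi_subset] at hlt
    rw [Finset.mem_insert, not_or] at hu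
    refine (le_blockWeight_insert_of_maximal hF' (Finset.mem_erase.mpr ⟨hu.1, huV⟩) hu.2).not_gt ?_
    by_cases h : ∃ j, u ∈ B j ∧ B j ⊆ insert u F
    · obtain ⟨j, huj, hj⟩ := h
      rw [blockWeight_insert_of_subset hB huj hu.2 hj]
      have := hi j ⟨u, huj⟩ (hj.trans (Finset.insert_subset huV hFΔ.1))
      omega
    · rw [blockWeight_insert_of_forall_not_subset fun j huj hj => h ⟨j, huj, hj⟩]
      omega
  refine ⟨hFΔ, fun G hG hFG => hF.le_of_ge ⟨hG, fun hvG => ?_⟩ hFG⟩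
  exact hG.2.not_ge (le_blockWeight_insert_v.trans
    (blockWeight_mono (Finset.insert_subset hvG hFG)))

lemma blockThresholdComplex_eq_bot (hV : V ∉ blockThresholdComplex V B c q)
    (h : ∀ i, B i ⊆ V → B i = ∅) : blockThresholdComplex V B c q = ⊥ := by
  refine eq_bot_iff.mpr fun F hF => hV ⟨subset_rfl, lt_of_le_of_lt ?_ hF.2⟩
  refine Finset.sum_le_sum_of_subset (Finset.monotone_filter_right _ fun i _ hi => ?_)
  exact h i hi ▸ Finset.empty_subset F

theorem vertexDecomposable_blockThresholdComplex (hB : Pairwise (Disjoint on B)) (c : ι → ℕ)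
    (q : ℕ) (V : Finset σ) : VertexDecomposable (blockThresholdComplex V B c q) := by
  classical
  induction hn : (V ∩ Finset.univ.biUnion B).card using Nat.strong_induction_on
    generalizing V B with
  | _ n ih =>
  by_cases hV : V ∈ blockThresholdComplex V B c q
  · have : blockThresholdComplex V B c q = LowerSet.Iic V :=
      le_antisymm (fun F hF => hF.1) (LowerSet.Iic_le.mpr hV)
    exact this ▸ .simplex V
  by_cases h_none : ∀ i, B i ⊆ V → B i = ∅
  · exact blockThresholdComplex_eq_bot hV h_none ▸ .void
  obtain ⟨i, hi, hi_max⟩ : ∃ i, (B i ⊆ V ∧ (B i).Nonempty) ∧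
      ∀ j, B j ⊆ V ∧ (B j).Nonempty → c j ≤ c i := by
    push Not at h_none
    simpa using Finset.exists_max_image (Finset.univ.filter fun i => B i ⊆ V ∧ (B i).Nonempty) c
      (h_none.imp fun i hi => (Finset.mem_filter_univ i).mpr hi)
  obtain ⟨hiV, v, hvi⟩ := hi
  have hvn : v ∈ V ∩ Finset.univ.biUnion B :=
    Finset.mem_inter.mpr ⟨hiV hvi, Finset.mem_biUnion.mpr ⟨i, Finset.mem_univ i, hvi⟩⟩
  have card_lt {S : Finset σ} (hS : S ⊆ (V ∩ Finset.univ.biUnion B).erase v) : S.card < n :=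
    hn ▸ (Finset.card_le_card hS).trans_lt (Finset.card_erase_lt_of_mem hvn)
  refine .shed v (fun F => maximal_of_maximal_deletion_blockThresholdComplex hB hV hvi hiV
    fun j hj hjV => hi_max j ⟨hjV, hj⟩) ?_ ?_
  · rw [closedStar_blockThresholdComplex (hiV hvi)]
    refine ih _ (card_lt fun w hw => ?_) (fun j k hjk => ?_) V rfl
    · simp only [Finset.mem_inter, Finset.mem_biUnion, Finset.mem_univ, true_and,
        Finset.mem_erase] at hw ⊢
      tauto
    · exact (hB hjk).mono (Finset.erase_subset v _) (Finset.erase_subset v _)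
  · rw [deletion_blockThresholdComplex]
    refine ih _ (card_lt ?_) hB _ rfl
    rw [Finset.erase_inter]

end BlockThreshold

section Matchings

variable {V : Type} {G : SimpleGraph V} {M : Finset (Sym2 V)} {F F' : Finset V} {k : ℕ} {a b : V}

/-- The set `F` contains the vertices of some `k`-matching of `G`. -/
def ContainsMatching (G : SimpleGraph V) (k : ℕ) (F : Finset V) : Prop :=
  ∃ M : Finset (Sym2 V), IsMatchingSet G M ∧ M.card = k ∧ matchVerts M ⊆ F

lemma ContainsMatching.mono (h : ContainsMatching G k F) (hF : F ⊆ F') :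
    ContainsMatching G k F' :=
  h.imp fun _ hM => ⟨hM.1, hM.2.1, hM.2.2.trans (Finset.coe_subset.mpr hF)⟩

lemma containsMatching_zero : ContainsMatching G 0 F :=
  ⟨∅, by simp [IsMatchingSet], rfl, by simp [matchVerts]⟩

lemma matchNum_eq_sSup [Fintype V] : matchNum G = sSup {k | ContainsMatching G k Finset.univ} := by
  simp only [matchNum, ContainsMatching, Finset.coe_univ, Set.subset_univ, and_true]

lemma matchVerts_insert [DecidableEq V] :
    matchVerts (insert s(a, b) M) = {a, b} ∪ matchVerts M := by
  ext v
  simp [matchVerts]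

lemma isMatchingSet_insert_iff [DecidableEq V] (hM : s(a, b) ∉ M) :
    IsMatchingSet G (insert s(a, b) M) ↔
      G.Adj a b ∧ a ∉ matchVerts M ∧ b ∉ matchVerts M ∧ IsMatchingSet G M := by
  have ne_of_mem {e : Sym2 V} (he : e ∈ M) : e ≠ s(a, b) := fun h => hM (h ▸ he)
  simp only [IsMatchingSet, matchVerts, Finset.coe_insert, Set.insert_subset_iff,
    SimpleGraph.mem_edgeSet, Finset.forall_mem_insert, Set.mem_ofPred_eq, not_exists, not_and,
    Sym2.mem_iff]
  grind

lemma containsMatching_succ [DecidableEq V] : ContainsMatching G (k + 1) F ↔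
    ∃ a ∈ F, ∃ b ∈ F, G.Adj a b ∧ ContainsMatching G k (F \ {a, b}) := by
  constructor
  · rintro ⟨M, hM, hcard, hMF⟩
    obtain ⟨e, M, he, rfl, rfl⟩ := Finset.card_eq_succ.mp hcard
    induction e using Sym2.ind with | _ a b =>
    obtain ⟨hab, ha, hb, hM⟩ := (isMatchingSet_insert_iff he).mp hM
    rw [matchVerts_insert, Set.union_subset_iff, Set.pair_subset_iff] at hMF
    refine ⟨a, hMF.1.1, b, hMF.1.2, hab, M, hM, rfl, fun v hv => ?_⟩
    rw [Finset.coe_sdiff, Finset.coe_pair]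
    exact ⟨hMF.2 hv, by rintro (rfl | rfl) <;> contradiction⟩
  · rintro ⟨a, ha, b, hb, hab, M, hM, rfl, hMF⟩
    rw [Finset.coe_sdiff, Finset.coe_pair, Set.subset_sdiff] at hMF
    have haM : a ∉ matchVerts M := Set.disjoint_right.mp hMF.2 (Set.mem_insert a {b})
    have hbM : b ∉ matchVerts M := Set.disjoint_right.mp hMF.2 (Set.mem_insert_of_mem a rfl)
    have habM : s(a, b) ∉ M := fun h => haM ⟨_, h, Sym2.mem_mk_left a b⟩
    refine ⟨insert s(a, b) M, (isMatchingSet_insert_iff habM).mpr ⟨hab, haM, hbM, hM⟩,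
      Finset.card_insert_of_notMem habM, ?_⟩
    rw [matchVerts_insert, Set.union_subset_iff, Set.pair_subset_iff]
    exact ⟨⟨ha, hb⟩, hMF.1⟩

lemma exists_subset_card_eq_of_containsMatching (h : ContainsMatching G k F) :
    ∃ F' ⊆ F, F'.card = 2 * k ∧ ContainsMatching G k F' := by
  classical
  induction k generalizing F with
  | zero => exact ⟨∅, Finset.empty_subset F, rfl, containsMatching_zero⟩
  | succ k ih =>
    obtain ⟨a, ha, b, hb, hab, h⟩ := containsMatching_succ.mp h
    obtain ⟨F', hF', hcard, h'⟩ := ih h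
    rw [Finset.subset_sdiff] at hF'
    have union_sdiff : (F' ∪ {a, b}) \ {a, b} = F' := Finset.union_sdiff_cancel_right hF'.2
    refine ⟨F' ∪ {a, b}, Finset.union_subset hF'.1 (Finset.insert_subset ha (by simpa)), ?_,
      containsMatching_succ.mpr ⟨a, by simp, b, by simp, hab, union_sdiff.symm ▸ h'⟩⟩
    rw [Finset.card_union_of_disjoint hF'.2, hcard, Finset.card_pair hab.ne]
    ring

end Matchings

section EdgeIdeal

variable {V : Type} {G : SimpleGraph V} {F : Finset V} {k : ℕ}

/-- The simplicial complex of all vertex sets of `G` that contain no `k`-matching. -/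
def matchingFreeComplex (G : SimpleGraph V) (k : ℕ) : LowerSet (Finset V) where
  carrier := {F | ¬ ContainsMatching G k F}
  lower' _ _ h hF := fun h' => hF (h'.mono h)

lemma notMem_matchingFreeComplex : F ∉ matchingFreeComplex G k ↔ ContainsMatching G k F :=
  not_not

variable {K : Type} [Field K]

lemma sqMon_eq_monomial (F : Finset V) :
    sqMon K F = monomial (Finsupp.indicator F fun _ _ => 1) 1 := by
  rw [Finsupp.indicator_eq_sum_single, monomial_sum_one]
  rfl

lemma edgeIdeal_pow_le (k : ℕ) : edgeIdeal K G ^ k ≤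
    restrictSupportIdeal K {α | (∀ v, α v ≤ 1) → ContainsMatching G k α.support}
      fun _ _ h hα hβ => (hα fun v => (h v).trans (hβ v)).mono (Finsupp.support_mono h) := by
  classical
  induction k with
  | zero => exact fun f _ α _ _ => containsMatching_zero
  | succ k ih =>
    rw [pow_succ', Ideal.mul_le]
    intro r hr f hf
    rw [← smul_eq_mul, ← Submodule.mem_colon_singleton]
    refine Ideal.span_le.mpr ?_ hr
    rintro _ ⟨a, b, hab, rfl⟩
    rw [SetLike.mem_coe, Submodule.mem_colon_singleton, smul_eq_mul, mul_assoc]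
    intro α (hα : α ∈ (X a * (X b * f)).support) hα_le
    simp only [support_X_mul, Finset.mem_map, exists_exists_and_eq_and,
      addLeftEmbedding_apply] at hα
    obtain ⟨β, hβ, rfl⟩ := hα
    simp only [Finsupp.add_apply] at hα_le
    have hβ_le (v : V) : β v ≤ 1 := by linarith [hα_le v]
    have hβ_ab : Disjoint β.support {a, b} := by
      rw [Finset.disjoint_insert_right, Finset.disjoint_singleton_right,
        Finsupp.notMem_support_iff, Finsupp.notMem_support_iff]
      have ha := hα_le a
      have hb := hα_le b
      rw [Finsupp.single_eq_same] at ha hb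
      omega
    refine containsMatching_succ.mpr ⟨a, by simp, b, by simp, hab, ?_⟩
    refine (ih hf hβ hβ_le).mono (Finset.subset_sdiff.mpr ⟨Finsupp.support_mono ?_, hβ_ab⟩)
    exact le_add_self.trans le_add_self

lemma sqMon_mem_edgeIdeal_pow : sqMon K F ∈ edgeIdeal K G ^ k ↔ ContainsMatching G k F := by
  classical
  constructor
  · intro h
    rw [sqMon_eq_monomial] at h
    have h_indicator (v : V) : Finsupp.indicator F (fun _ _ => 1) v ≤ 1 := by
      rw [Finsupp.indicator_apply]
      split_ifs <;> simp
    have h_support : (Finsupp.indicator F fun _ _ => 1) ∈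
        (monomial (Finsupp.indicator F fun _ _ => 1) (1 : K)).support := by
      rw [mem_support_iff, coeff_monomial, if_pos rfl]
      exact one_ne_zero
    exact (edgeIdeal_pow_le k h h_support h_indicator).mono fun v hv =>
      Finsupp.support_indicator_subset F _ hv
  · intro h
    induction k generalizing F with
    | zero => simp
    | succ k ih =>
      obtain ⟨a, ha, b, hb, hab, h⟩ := containsMatching_succ.mp h
      have sqMon_eq : sqMon K F = X a * X b * sqMon K (F \ {a, b}) := by
        rw [sqMon, ← Finset.prod_pair hab.ne, mul_comm]
        exact (Finset.prod_sdiff (Finset.insert_subset ha (by simpa))).symm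
      rw [sqMon_eq, pow_succ']
      exact Ideal.mul_mem_mul (Ideal.subset_span ⟨a, b, hab, rfl⟩) (ih h)

lemma sqfreePower_edgeIdeal (k : ℕ) :
    sqfreePower K (edgeIdeal K G) k = stanleyReisnerIdeal K (matchingFreeComplex G k) := by
  rw [sqfreePower, ← span_sqMon_notMem]
  congr! 5 with p F
  exact and_congr_right fun h => by rw [h, sqMon_mem_edgeIdeal_pow, notMem_matchingFreeComplex]

lemma indeg_sqfreePower_edgeIdeal (h : ContainsMatching G k F) :
    indeg K (sqfreePower K (edgeIdeal K G) k) = 2 * k := by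
  simp only [indeg, sqfreePower_edgeIdeal, sqMon_mem_stanleyReisnerIdeal,
    notMem_matchingFreeComplex]
  refine IsLeast.csInf_eq ⟨?_, ?_⟩
  · obtain ⟨F', -, hF'⟩ := exists_subset_card_eq_of_containsMatching h
    exact ⟨F', hF'⟩
  · rintro _ ⟨F', rfl, hF'⟩
    obtain ⟨S, hS, hcard, -⟩ := exists_subset_card_eq_of_containsMatching hF'
    exact hcard ▸ Finset.card_le_card hS

lemma nDepth_edgeIdeal (h : ContainsMatching G k F) : nDepth K (edgeIdeal K G) k =
    polyDepth K (stanleyReisnerIdeal K (matchingFreeComplex G k)) - (2 * k - 1) := by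
  rw [nDepth, indeg_sqfreePower_edgeIdeal h, sqfreePower_edgeIdeal]
  push_cast
  rfl

end EdgeIdeal

section ClusterGraph

variable {σ τ : Type} {p : σ → τ} {F : Finset σ} {k : ℕ} {a b : σ}

/-- The disjoint union of the complete graphs on the fibres of `p`. -/
def clusterGraph (p : σ → τ) : SimpleGraph σ where
  Adj a b := a ≠ b ∧ p a = p b
  symm.symm _ _ h := ⟨h.1.symm, h.2.symm⟩
  loopless := ⟨fun _ h => h.1 rfl⟩

variable [DecidableEq τ]

section Fiber

variable [Fintype σ] {t : τ} {v : σ}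

/-- The fibre of `p` over `t`, as a finite set. -/
def fiber (p : σ → τ) (t : τ) : Finset σ := Finset.univ.filter (p · = t)

lemma mem_fiber : v ∈ fiber p t ↔ p v = t := Finset.mem_filter_univ v

lemma filter_eq_fiber_of_subset (h : fiber p t ⊆ F) : F.filter (p · = t) = fiber p t := by
  ext v
  rw [Finset.mem_filter, ← mem_fiber, and_iff_right_of_imp (@h v)]

lemma noIsolated_clusterGraph (h : ∀ t, 1 < (fiber p t).card) : NoIsolated (clusterGraph p) := by
  intro v
  obtain ⟨u, hu, huv⟩ := Finset.exists_mem_ne (h (p v)) v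
  exact ⟨u, huv.symm, (mem_fiber.mp hu).symm⟩

end Fiber

variable [Fintype τ]

/-- The largest number of disjoint edges of `clusterGraph p` inside `F`. -/
def clusterMatchNum (p : σ → τ) (F : Finset σ) : ℕ := ∑ t, (F.filter (p · = t)).card / 2

lemma clusterMatchNum_eq_sdiff_pair_add_one [DecidableEq σ] (ha : a ∈ F) (hb : b ∈ F)
    (hab : (clusterGraph p).Adj a b) :
    clusterMatchNum p F = clusterMatchNum p (F \ {a, b}) + 1 := by
  have card_eq (t : τ) : (F.filter (p · = t)).card / 2 =
      ((F \ {a, b}).filter (p · = t)).card / 2 + if p a = t then 1 else 0 := by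
    have card_pair :
        (({a, b} : Finset σ).filter (p · = t)).card = 2 * if p a = t then 1 else 0 := by
      split_ifs with h
      · rw [Finset.filter_true_of_mem (by simp [← hab.2, h]), Finset.card_pair hab.ne]
      · rw [Finset.filter_false_of_mem (by simp [← hab.2, h]), Finset.card_empty]
    have hF : F \ {a, b} ∪ {a, b} = F :=
      Finset.sdiff_union_of_subset (Finset.insert_subset ha (by simpa))
    conv_lhs => rw [← hF]
    rw [Finset.filter_union, Finset.card_union_of_disjoint
      (Finset.disjoint_filter_filter Finset.sdiff_disjoint), card_pair,
      Nat.add_mul_div_left _ _ two_pos]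
  simp only [clusterMatchNum, card_eq, Finset.sum_add_distrib, Finset.sum_ite_eq,
    Finset.mem_univ, if_true]

lemma containsMatching_clusterGraph_iff :
    ContainsMatching (clusterGraph p) k F ↔ k ≤ clusterMatchNum p F := by
  classical
  induction k generalizing F with
  | zero => exact iff_of_true containsMatching_zero (Nat.zero_le _)
  | succ k ih =>
    rw [containsMatching_succ]
    constructor
    · rintro ⟨a, ha, b, hb, hab, h⟩
      rw [clusterMatchNum_eq_sdiff_pair_add_one ha hb hab]
      exact Nat.succ_le_succ (ih.mp h)
    · intro h
      obtain ⟨t, -, ht⟩ := Finset.exists_ne_zero_of_sum_ne_zero (Nat.ne_zero_of_lt h)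
      obtain ⟨a, ha, b, hb, hab⟩ : ∃ a ∈ F.filter (p · = t),
          ∃ b ∈ F.filter (p · = t), a ≠ b := Finset.one_lt_card.mp (by omega)
      rw [Finset.mem_filter] at ha hb
      have adj : (clusterGraph p).Adj a b := ⟨hab, ha.2.trans hb.2.symm⟩
      rw [clusterMatchNum_eq_sdiff_pair_add_one ha.1 hb.1 adj] at h
      exact ⟨a, ha.1, b, hb.1, adj, ih.mpr (Nat.le_of_succ_le_succ h)⟩

lemma matchNum_clusterGraph [Fintype σ] :
    matchNum (clusterGraph p) = clusterMatchNum p Finset.univ := by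
  rw [matchNum_eq_sSup]
  simp only [containsMatching_clusterGraph_iff]
  exact csSup_Iic

end ClusterGraph

section PairsAndClique

open Function

variable {σ ι : Type} [Fintype σ] [DecidableEq ι] {p : σ → Option ι}

/-- The blocks `fiber p (some i)`, for all `i`, together with the singletons in `fiber p none`. -/
def fiberBlocks (p : σ → Option ι) : ι ⊕ {v // p v = none} → Finset σ :=
  Sum.elim (fun i => fiber p (some i)) fun v => {v.1}

lemma pairwise_disjoint_fiberBlocks : Pairwise (Disjoint on fiberBlocks p) := by
  rintro (i | ⟨v, hv⟩) (j | ⟨w, hw⟩) h <;>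
    simp only [onFun, fiberBlocks, Sum.elim_inl, Sum.elim_inr, Finset.disjoint_left,
      mem_fiber, Finset.mem_singleton] <;>
    grind

variable {F : Finset σ} {k : ℕ}

lemma card_fiber_none_add [Fintype ι] (h_pair : ∀ i, (fiber p (some i)).card = 2) :
    (fiber p none).card + 2 * Fintype.card ι = Fintype.card σ := by
  have card_eq : Fintype.card σ = ∑ t, (fiber p t).card :=
    Finset.card_eq_sum_card_fiberwise (by simp)
  simp only [card_eq, Fintype.sum_option, h_pair, Finset.sum_const, Finset.card_univ, smul_eq_mul,
    mul_comm]

variable [Fintype ι]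

section FullFibers

variable [DecidableEq σ]

/-- The number of indices `i` such that `fiber p (some i)` is contained in `F`. -/
def numFullFibers (p : σ → Option ι) (F : Finset σ) : ℕ :=
  (Finset.univ.filter fun i => fiber p (some i) ⊆ F).card

lemma numFullFibers_eq_card (h : (fiber p none)ᶜ ⊆ F) : numFullFibers p F = Fintype.card ι := by
  refine congrArg _ (Finset.filter_true_of_mem fun i _ v hv => h ?_)
  rw [Finset.mem_compl, mem_fiber, mem_fiber.mp hv]
  exact Option.some_ne_none i

lemma numFullFibers_le : numFullFibers p F ≤ Fintype.card ι := Finset.card_le_univ _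

lemma blockWeight_fiberBlocks : blockWeight (fiberBlocks p) (Sum.elim 2 1) F =
    2 * numFullFibers p F + (F.filter (p · = none)).card := by
  have card_none : (F.filter (p · = none)).card =
      (Finset.univ.filter fun v : {v // p v = none} => {v.1} ⊆ F).card := by
    rw [← Finset.card_subtype]
    congr 1
    ext v
    simp
  rw [blockWeight, Finset.sum_filter, Fintype.sum_sum_type, card_none, numFullFibers,
    Finset.card_filter, Finset.card_filter, Finset.mul_sum]
  simp only [mul_ite, mul_one, mul_zero]
  rfl

section FibersOfCardTwo

variable (h_pair : ∀ i, (fiber p (some i)).card = 2)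
include h_pair

lemma clusterMatchNum_eq :
    clusterMatchNum p F = (F.filter (p · = none)).card / 2 + numFullFibers p F := by
  rw [clusterMatchNum, Fintype.sum_option, numFullFibers, Finset.card_filter _ Finset.univ]
  refine congrArg _ (Finset.sum_congr rfl fun i _ => ?_)
  split_ifs with h
  · rw [filter_eq_fiber_of_subset h, h_pair]
  · refine Nat.div_eq_of_lt (h_pair i ▸ Finset.card_lt_card ?_)
    exact ⟨Finset.filter_subset_filter _ (Finset.subset_univ F),
      fun h' => h (h'.trans (Finset.filter_subset _ F))⟩

lemma matchingFreeComplex_clusterGraph (k : ℕ) :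
    matchingFreeComplex (clusterGraph p) k =
      blockThresholdComplex Finset.univ (fiberBlocks p) (Sum.elim 2 1) (2 * k) := by
  ext F
  rw [SetLike.mem_coe, SetLike.mem_coe, ← not_iff_not, notMem_matchingFreeComplex,
    containsMatching_clusterGraph_iff, clusterMatchNum_eq h_pair, mem_blockThresholdComplex,
    blockWeight_fiberBlocks]
  simp only [Finset.subset_univ, true_and]
  omega

omit [Fintype ι] in
lemma vertexDecomposable_matchingFreeComplex_clusterGraph [Finite ι] (k : ℕ) :
    VertexDecomposable (matchingFreeComplex (clusterGraph p) k) := by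
  have := Fintype.ofFinite ι
  rw [matchingFreeComplex_clusterGraph h_pair]
  exact vertexDecomposable_blockThresholdComplex pairwise_disjoint_fiberBlocks _ _ _

variable (hF : Maximal (· ∈ matchingFreeComplex (clusterGraph p) k) F)
include hF

omit [Fintype ι] in
lemma card_filter_eq_of_maximal [Finite ι] (i : ι) :
    (F.filter (p · = some i)).card = 1 + if fiber p (some i) ⊆ F then 1 else 0 := by
  have := Fintype.ofFinite ι
  rw [matchingFreeComplex_clusterGraph h_pair] at hF
  split_ifs with h
  · rw [filter_eq_fiber_of_subset h, h_pair]
  · obtain ⟨u, hui, huF⟩ := Finset.not_subset.mp h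
    have hi : fiber p (some i) ⊆ insert u F := subset_insert_of_maximal (i := Sum.inl i)
      pairwise_disjoint_fiberBlocks hF (Finset.mem_univ u) huF hui
    have filter_eq : F.filter (p · = some i) = (fiber p (some i)).erase u := by
      rw [← filter_eq_fiber_of_subset hi, Finset.filter_insert, if_pos (mem_fiber.mp hui),
        Finset.erase_insert fun h => huF (Finset.filter_subset _ F h)]
    rw [filter_eq, Finset.card_erase_of_mem hui, h_pair]

lemma card_eq_of_maximal :
    F.card = (F.filter (p · = none)).card + Fintype.card ι + numFullFibers p F := by
  rw [Finset.card_eq_sum_card_fiberwise (f := p) (t := Finset.univ) (by simp),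
    Fintype.sum_option]
  simp only [card_filter_eq_of_maximal h_pair hF, Finset.sum_add_distrib, add_assoc,
    numFullFibers, Finset.card_filter, Finset.sum_const, Finset.card_univ, smul_eq_mul, mul_one]

lemma two_mul_numFullFibers_add_lt :
    2 * numFullFibers p F + (F.filter (p · = none)).card < 2 * k := by
  rw [matchingFreeComplex_clusterGraph h_pair] at hF
  exact blockWeight_fiberBlocks (p := p) ▸ hF.prop.2

lemma two_mul_le_add_of_card_filter_none_lt
    (h : (F.filter (p · = none)).card < (fiber p none).card) :
    2 * k ≤ 1 + (2 * numFullFibers p F + (F.filter (p · = none)).card) := by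
  rw [matchingFreeComplex_clusterGraph h_pair] at hF
  obtain ⟨v, hv, hvF⟩ := Finset.exists_mem_notMem_of_card_lt_card h
  rw [← blockWeight_fiberBlocks]
  refine le_add_blockWeight_of_maximal (i := Sum.inr ⟨v, mem_fiber.mp hv⟩)
    pairwise_disjoint_fiberBlocks hF (Finset.mem_univ v) ?_ (Finset.mem_singleton.mpr rfl)
  exact fun h => hvF (Finset.mem_filter.mpr ⟨h, mem_fiber.mp hv⟩)

lemma two_mul_le_add_of_numFullFibers_lt (h : numFullFibers p F < Fintype.card ι) :
    2 * k ≤ 2 + (2 * numFullFibers p F + (F.filter (p · = none)).card) := by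
  rw [matchingFreeComplex_clusterGraph h_pair] at hF
  obtain ⟨i, -, hi⟩ := Finset.exists_mem_notMem_of_card_lt_card h
  rw [Finset.mem_filter_univ] at hi
  obtain ⟨v, hvi, hvF⟩ := Finset.not_subset.mp hi
  rw [← blockWeight_fiberBlocks]
  exact le_add_blockWeight_of_maximal (i := Sum.inl i)
    pairwise_disjoint_fiberBlocks hF (Finset.mem_univ v) hvF hvi

end FibersOfCardTwo

end FullFibers

section FacetCard

variable {m : ℕ} (h_pair : ∀ i, (fiber p (some i)).card = 2) (hσ : Fintype.card σ = 2 * m)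
include h_pair hσ

lemma clusterMatchNum_univ : clusterMatchNum p Finset.univ = m := by
  classical
  have h_none := card_fiber_none_add h_pair
  rw [fiber] at h_none
  rw [clusterMatchNum_eq h_pair, numFullFibers_eq_card (Finset.subset_univ _)]
  omega

lemma le_card_of_maximal (hιm : Fintype.card ι < m) (hkm : k ≤ m)
    (hF : Maximal (· ∈ matchingFreeComplex (clusterGraph p) k) F) :
    (if k ≤ Fintype.card ι then 2 * k else 2 * k - 1) ≤ F.card := by
  classical
  have h_card := card_eq_of_maximal h_pair hF
  have h_none := card_fiber_none_add h_pair
  have h_full_le := numFullFibers_le (p := p) (F := F)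
  have h_filter_le : (F.filter (p · = none)).card ≤ (fiber p none).card :=
    Finset.card_le_card (Finset.filter_subset_filter _ (Finset.subset_univ F))
  have h_weight := two_mul_numFullFibers_add_lt h_pair hF
  have h_filter := two_mul_le_add_of_card_filter_none_lt h_pair hF
  have h_full := two_mul_le_add_of_numFullFibers_lt h_pair hF
  split_ifs <;> omega

lemma exists_maximal_card_eq (hιk : Fintype.card ι < k) (hkm : k ≤ m) :
    ∃ F, Maximal (· ∈ matchingFreeComplex (clusterGraph p) k) F ∧ F.card = 2 * k - 1 := by
  classical
  have h_compl : (fiber p none)ᶜ ∈ matchingFreeComplex (clusterGraph p) k := by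
    by_contra h
    rw [notMem_matchingFreeComplex, containsMatching_clusterGraph_iff, clusterMatchNum_eq h_pair,
      Finset.filter_false_of_mem (fun v hv => by simpa [mem_fiber] using hv)] at h
    exact hιk.not_ge (h.trans (by simpa using numFullFibers_le))
  obtain ⟨F, h_subset, hF⟩ := (Set.toFinite
    (matchingFreeComplex (clusterGraph p) k : Set (Finset σ))).exists_le_maximal h_compl
  refine ⟨F, hF, ?_⟩
  have h_card := card_eq_of_maximal h_pair hF
  have h_none := card_fiber_none_add h_pair
  have h_full := numFullFibers_eq_card h_subset
  have h_weight := two_mul_numFullFibers_add_lt h_pair hF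
  have h_filter := two_mul_le_add_of_card_filter_none_lt h_pair hF
  omega

variable (K : Type) [Field K]

lemma nDepth_edgeIdeal_clusterGraph_eq_zero_iff (hιm : Fintype.card ι < m) (hk : 1 ≤ k)
    (hkm : k ≤ m) :
    nDepth K (edgeIdeal K (clusterGraph p)) k = 0 ↔ Fintype.card ι + 1 ≤ k := by
  classical
  have contains : ContainsMatching (clusterGraph p) k Finset.univ :=
    containsMatching_clusterGraph_iff.mpr ((clusterMatchNum_univ h_pair hσ).symm ▸ hkm)
  have h_empty : ∅ ∈ matchingFreeComplex (clusterGraph p) k := by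
    by_contra h
    rw [notMem_matchingFreeComplex, containsMatching_clusterGraph_iff] at h
    simp only [clusterMatchNum, Finset.filter_empty, Finset.card_empty, Nat.zero_div,
      Finset.sum_const_zero] at h
    omega
  have le_depth := le_polyDepth_of_vertexDecomposable (K := K)
    (vertexDecomposable_matchingFreeComplex_clusterGraph h_pair k) h_empty
    fun F => le_card_of_maximal h_pair hσ hιm hkm
  rw [nDepth_edgeIdeal contains]
  obtain hιk | hkι := lt_or_ge (Fintype.card ι) k
  · obtain ⟨F, hF, h_card⟩ := exists_maximal_card_eq h_pair hσ hιk hkm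
    have depth_le := polyDepth_le_card_facet (K := K) hF
    rw [if_neg hιk.not_ge] at le_depth
    omega
  · rw [if_pos hkι] at le_depth
    omega

end FacetCard

end PairsAndClique

section PairIndex

variable {s m : ℕ}

/-- The map `v ↦ ⌊v / 2⌋` on `{0, …, 2 m - 1}`, where all values `≥ s` are merged into `none`. -/
def pairIndex (s m : ℕ) (v : Fin (2 * m)) : Option (Fin s) :=
  if h : (v : ℕ) / 2 < s then some ⟨v / 2, h⟩ else none

lemma card_fiber_pairIndex_some (hsm : s ≤ m) (i : Fin s) :
    (fiber (pairIndex s m) (some i)).card = 2 := by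
  have hi := i.isLt
  refine Finset.card_eq_two.mpr ⟨⟨2 * i, by omega⟩, ⟨2 * i + 1, by omega⟩, by simp, ?_⟩
  ext v
  simp only [mem_fiber, pairIndex, Option.dite_none_right_eq_some, Option.some.injEq,
    Finset.mem_insert, Finset.mem_singleton, Fin.ext_iff]
  constructor
  · rintro ⟨_, h⟩
    omega
  · exact fun h => ⟨by omega, by omega⟩

end PairIndex

/-- **Theorem 3.7.** Given positive integers `s < m`, there exists a graph `G` with
matching number `ν(G) = m` such that `g_{I(G)}(k) = 0` if and only if
`k ∈ {s+1,…,m}`. -/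
theorem exists_graph_normalized_depth_zero_iff (K : Type) [Field K]
    (s m : ℕ) (hs : 1 ≤ s) (hsm : s < m) :
    ∃ (n : ℕ) (G : SimpleGraph (Fin n)), NoIsolated G ∧ matchNum G = m ∧
      ∀ k : ℕ, 1 ≤ k → k ≤ m →
        (nDepth K (edgeIdeal K G) k = 0 ↔ s + 1 ≤ k) := by
  have h_pair := card_fiber_pairIndex_some hsm.le
  have h_card : Fintype.card (Fin (2 * m)) = 2 * m := Fintype.card_fin _
  have h_none := card_fiber_none_add h_pair
  rw [h_card, Fintype.card_fin] at h_none
  have one_lt_card_fiber (t : Option (Fin s)) : 1 < (fiber (pairIndex s m) t).card := by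
    cases t with
    | none => omega
    | some i => exact (h_pair i).symm ▸ one_lt_two
  refine ⟨2 * m, clusterGraph (pairIndex s m), noIsolated_clusterGraph one_lt_card_fiber,
    matchNum_clusterGraph.trans (clusterMatchNum_univ h_pair h_card), fun k hk hkm => ?_⟩
  rw [nDepth_edgeIdeal_clusterGraph_eq_zero_iff h_pair h_card K (by simpa) hk hkm, Fintype.card_fin]
end
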